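/- Let k, m, n be positive integers with k+m ≤ n and let w ∈ Sₙ. Then in Hₙ, 𝔖_w · h_m(x₁,…,x_k) = Σ_{w′} 𝔖_{w′}, where h_m(x₁,…,x_k) is the complete homogeneous symmetric polynomial of degree m in x₁,…,x_k and the sum is over all w′ ∈ Sₙ with w →_{r[k,m]} w′. -/

import Mathlib

open Equiv MvPolynomial

attribute [local instance] Classical.propDecidable

namespace SchubertPieri

/-- Position `j ∈ {1,…,N}` (1-indexed) as an element of `Fin N` (0-indexed). -/
def pos (N : ℕ) [NeZero N] (j : ℕ) : Fin N :=
  ⟨(j - 1) % N, Nat.mod_lt _ (Nat.pos_of_ne_zero (NeZero.ne N))⟩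

/-- The transposition `t_{a,b}` interchanging positions `a` and `b` (1-indexed). -/
def t (N : ℕ) [NeZero N] (a b : ℕ) : Equiv.Perm (Fin N) :=
  Equiv.swap (pos N a) (pos N b)

/-- The value `w(j)` for `j ∈ {1,…,N}` (1-indexed). -/
def val {N : ℕ} [NeZero N] (w : Equiv.Perm (Fin N)) (j : ℕ) : ℕ :=
  (w (pos N j) : ℕ) + 1

/-- The length of `w`: its number of inversions. -/
def len {N : ℕ} (w : Equiv.Perm (Fin N)) : ℕ :=
  (Finset.univ.filter fun p : Fin N × Fin N => p.1 < p.2 ∧ w p.2 < w p.1).card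

/-- The longest permutation `w₀ : j ↦ N+1-j`. -/
def w0 (N : ℕ) : Equiv.Perm (Fin N) :=
  ⟨Fin.rev, Fin.rev, Fin.rev_rev, Fin.rev_rev⟩

/-- The product `t_{a 0, b 0} ⋯ t_{a (i-1), b (i-1)}`. -/
def tProd (N : ℕ) [NeZero N] (a b : ℕ → ℕ) (i : ℕ) : Equiv.Perm (Fin N) :=
  ((List.range i).map fun j => t N (a j) (b j)).prod

/-- `r[k,m] = t_{k,k+1} t_{k,k+2} ⋯ t_{k,k+m}`, the (m+1)-cycle with
`r[k,m](k) = k+m` and `r[k,m](j) = j-1` for `k+1 ≤ j ≤ k+m`. -/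
def rPerm (N k m : ℕ) [NeZero N] : Equiv.Perm (Fin N) :=
  ((List.range m).map fun i => t N k (k + 1 + i)).prod

/-- `c[k,m] = t_{k,k+1} t_{k-1,k+1} ⋯ t_{k-m+1,k+1}`, the (m+1)-cycle with
`c[k,m](j) = j+1` for `k-m+1 ≤ j ≤ k` and `c[k,m](k+1) = k-m+1`. -/
def cPerm (N k m : ℕ) [NeZero N] : Equiv.Perm (Fin N) :=
  ((List.range m).map fun i => t N (k - i) (k + 1)).prod

/-- The conditions that `aᵢ ≤ k < bᵢ` (with all indices in `{1,…,N}`) and that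
`ℓ(w t_{a₁ b₁} ⋯ t_{aᵢ bᵢ}) = ℓ(w) + i` for `1 ≤ i ≤ m`. -/
def StepOK (N k m : ℕ) [NeZero N] (w : Equiv.Perm (Fin N)) (a b : ℕ → ℕ) : Prop :=
  (∀ i, i < m → 1 ≤ a i ∧ a i ≤ k ∧ k < b i ∧ b i ≤ N) ∧
  (∀ i, i ≤ m → len (w * tProd N a b i) = len w + i)

/-- `w →_{r[k,m]} w'`. -/
def RelR (N k m : ℕ) [NeZero N] (w w' : Equiv.Perm (Fin N)) : Prop :=
  ∃ a b : ℕ → ℕ, StepOK N k m w a b ∧ w' = w * tProd N a b m ∧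
    (∀ i j, i < m → j < m → i ≠ j → b i ≠ b j)

/-- `w →_{c[k,m]} w'`. -/
def RelC (N k m : ℕ) [NeZero N] (w w' : Equiv.Perm (Fin N)) : Prop :=
  ∃ a b : ℕ → ℕ, StepOK N k m w a b ∧ w' = w * tProd N a b m ∧
    (∀ i j, i < m → j < m → i ≠ j → a i ≠ a j)

/-- The divided difference operator `∂ᵢ f = (f - sᵢ·f)/(xᵢ - xᵢ₊₁)` (1-indexed `i`);
the quotient is exact, and is recovered here as the (unique) witness of divisibility. -/
noncomputable def divDiff {N : ℕ} [NeZero N] (i : ℕ) (f : MvPolynomial (Fin N) ℤ) :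
    MvPolynomial (Fin N) ℤ :=
  if h : (X (pos N i) - X (pos N (i + 1))) ∣ (f - rename (⇑(t N i (i + 1))) f) then
    h.choose
  else 0

/-- `∂_{a₁} ∘ ⋯ ∘ ∂_{a_p}` applied to `f`, for a word `l = [a₁,…,a_p]`. -/
noncomputable def divDiffWord {N : ℕ} [NeZero N] (l : List ℕ) (f : MvPolynomial (Fin N) ℤ) :
    MvPolynomial (Fin N) ℤ :=
  l.foldr divDiff f

/-- Auxiliary: produce a reduced word for `w` by repeatedly removing a descent. -/
def redWordAux (N : ℕ) [NeZero N] : ℕ → Equiv.Perm (Fin N) → List ℕ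
  | 0, _ => []
  | fuel + 1, w =>
    match ((List.range (N - 1)).map (· + 1)).find? (fun i => decide (val w (i + 1) < val w i)) with
    | none => []
    | some i => redWordAux N fuel (w * t N i (i + 1)) ++ [i]

/-- A canonical reduced word `(a₁,…,a_p)` for `w`, i.e. `w = s_{a₁} ⋯ s_{a_p}` with `p = ℓ(w)`. -/
def redWord (N : ℕ) [NeZero N] (w : Equiv.Perm (Fin N)) : List ℕ :=
  redWordAux N (N * N) w

/-- The staircase monomial `x₁^{N-1} x₂^{N-2} ⋯ x_{N-1}`. -/
noncomputable def staircase (N : ℕ) : MvPolynomial (Fin N) ℤ :=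
  ∏ i : Fin N, X i ^ (N - 1 - (i : ℕ))

/-- The Schubert polynomial `𝔖_w = ∂_{w⁻¹w₀}(x₁^{N-1} ⋯ x_{N-1})`. -/
noncomputable def schubertPoly (N : ℕ) [NeZero N] (w : Equiv.Perm (Fin N)) :
    MvPolynomial (Fin N) ℤ :=
  divDiffWord (redWord N (w⁻¹ * w0 N)) (staircase N)

/-- The ideal of `Rₙ` generated by the symmetric polynomials with zero constant term. -/
noncomputable def symIdeal (N : ℕ) : Ideal (MvPolynomial (Fin N) ℤ) :=
  Ideal.span {f : MvPolynomial (Fin N) ℤ | f.IsSymmetric ∧ constantCoeff f = 0}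

/-- The ring `Hₙ = Rₙ/𝒮`. -/
abbrev HRing (N : ℕ) := MvPolynomial (Fin N) ℤ ⧸ symIdeal N

/-- The class of the Schubert polynomial `𝔖_w` in `Hₙ`. -/
noncomputable def SS (N : ℕ) [NeZero N] (w : Equiv.Perm (Fin N)) : HRing N :=
  Ideal.Quotient.mk (symIdeal N) (schubertPoly N w)

/-- The complete homogeneous symmetric polynomial of degree `m` in `x₁,…,x_k`. -/
noncomputable def hPoly (N k m : ℕ) : MvPolynomial (Fin N) ℤ :=
  ∑ s ∈ (Finset.univ.filter fun i : Fin N => (i : ℕ) < k).sym m,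
    (Multiset.map X (s : Multiset (Fin N))).prod

/-- The elementary symmetric polynomial of degree `m` in `x₁,…,x_k`. -/
noncomputable def ePoly (N k m : ℕ) : MvPolynomial (Fin N) ℤ :=
  ∑ s ∈ (Finset.univ.filter fun i : Fin N => (i : ℕ) < k).powersetCard m, ∏ i ∈ s, X i

/-- Covering relation of the `k`-Bruhat order. -/
def kCover (N k : ℕ) [NeZero N] (w w' : Equiv.Perm (Fin N)) : Prop :=
  ∃ a b : ℕ, 1 ≤ a ∧ a ≤ k ∧ k < b ∧ b ≤ N ∧ w' = w * t N a b ∧ len w' = len w + 1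

/-- The (strict) `k`-Bruhat order `<ₖ`. -/
def kBruhat (N k : ℕ) [NeZero N] : Equiv.Perm (Fin N) → Equiv.Perm (Fin N) → Prop :=
  Relation.TransGen (kCover N k)

/-- The label `w⁽ⁱ⁺¹⁾(a_{i+1})` (0-indexed `i`) of the `(i+1)`-st step of a path. -/
def label {N : ℕ} [NeZero N] (w : Equiv.Perm (Fin N)) (a b : ℕ → ℕ) (i : ℕ) : ℕ :=
  val (w * tProd N a b (i + 1)) (a i)

/-- `(a,b)` encodes a path of length `m` in the `k`-Bruhat order from `w` to `w'`
(normalized so that `a i = b i = 0` for `i ≥ m`, making the encoding unique). -/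
def PathWit (N k m : ℕ) [NeZero N] (w w' : Equiv.Perm (Fin N))
    (ab : (ℕ → ℕ) × (ℕ → ℕ)) : Prop :=
  StepOK N k m w ab.1 ab.2 ∧ w' = w * tProd N ab.1 ab.2 m ∧
    ∀ i, m ≤ i → ab.1 i = 0 ∧ ab.2 i = 0

/-- Paths of length `m` in the `k`-Bruhat order from `w` to `w'` with strictly
increasing labels. -/
def IncPaths (N k m : ℕ) [NeZero N] (w w' : Equiv.Perm (Fin N)) :
    Set ((ℕ → ℕ) × (ℕ → ℕ)) :=
  {ab | PathWit N k m w w' ab ∧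
    ∀ i j, i < j → j < m → label w ab.1 ab.2 i < label w ab.1 ab.2 j}

/-- Paths of length `m` in the `k`-Bruhat order from `w` to `w'` with strictly
decreasing labels. -/
def DecPaths (N k m : ℕ) [NeZero N] (w w' : Equiv.Perm (Fin N)) :
    Set ((ℕ → ℕ) × (ℕ → ℕ)) :=
  {ab | PathWit N k m w w' ab ∧
    ∀ i j, i < j → j < m → label w ab.1 ab.2 j < label w ab.1 ab.2 i}


/-- The cycle `(x₁ x₂ … x_r)` (sending `x₁ ↦ x₂ ↦ ⋯ ↦ x_r ↦ x₁`), as a product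
of transpositions. -/
def cycleList (N : ℕ) [NeZero N] (l : List ℕ) : Equiv.Perm (Fin N) :=
  ((l.zip l.tail).map fun p => t N p.1 p.2).prod

/-- The Grassmannian permutation `h[k;p,q]` of descent `k` and hook shape `(p,1^{q-1})`:
the `(p+q)`-cycle `(k-q+1  k-q+2 … k  k+p  k+p-1 … k+1)`. -/
def hookPerm (N k p q : ℕ) [NeZero N] : Equiv.Perm (Fin N) :=
  cycleList N (((List.range q).map fun i => k - q + 1 + i) ++
    ((List.range p).reverse.map fun i => k + 1 + i))

/-- `w|ₚ ∈ S_{N-1}`: delete row `p` and column `w(p)` from the permutation matrix of `w`. -/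
def drop {N : ℕ} (w : Equiv.Perm (Fin (N + 1))) (p : Fin (N + 1)) : Equiv.Perm (Fin N) :=
  Equiv.removeNone (((finSuccEquiv' p).symm.trans (w : Fin (N + 1) ≃ Fin (N + 1))).trans
    (finSuccEquiv' (w p)))

/-- `lam` is a partition with at most `k` parts (1-indexed parts `lam 1 ≥ lam 2 ≥ ⋯`,
normalized by `lam 0 = 0`). -/
def IsPartFun (k : ℕ) (lam : ℕ → ℕ) : Prop :=
  lam 0 = 0 ∧ (∀ j, 1 ≤ j → lam (j + 1) ≤ lam j) ∧ ∀ j, k < j → lam j = 0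

/-- `h_d(x₁,…,x_k)` for an integer `d`, with `h_d = 0` for `d < 0`. -/
noncomputable def hPolyZ (N k : ℕ) (d : ℤ) : MvPolynomial (Fin N) ℤ :=
  if 0 ≤ d then hPoly N k d.toNat else 0

/-- The Schur polynomial `s_λ(x₁,…,x_k)`, via the Jacobi–Trudi determinant
`det(h_{λᵢ+j-i})_{1 ≤ i,j ≤ k}`. -/
noncomputable def schurPoly (N k : ℕ) (lam : ℕ → ℕ) : MvPolynomial (Fin N) ℤ :=
  (Matrix.of fun i j : Fin k =>
    hPolyZ N k ((lam ((i : ℕ) + 1) : ℤ) + (j : ℕ) - (i : ℕ))).det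

/-- `r_j = #{i : aᵢ = j}` (with `i` ranging over `0,…,m-1`, 0-indexed). -/
def rJ (a : ℕ → ℕ) (m j : ℕ) : ℕ := ((Finset.range m).filter fun i => a i = j).card

/-- `μ_j = r_{j+1} + ⋯ + r_k`. -/
def muJ (a : ℕ → ℕ) (m k j : ℕ) : ℕ :=
  if j = 0 then 0 else ∑ j' ∈ Finset.Icc (j + 1) k, rJ a m j'

/-- `λ_j = μ_j + r_j`. -/
def lamJ (a : ℕ → ℕ) (m k j : ℕ) : ℕ :=
  if j = 0 then 0 else muJ a m k j + rJ a m j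

/-- `d_j = #{i : bᵢ = N+1-j}` (with `i` ranging over `0,…,m-1`, 0-indexed). -/
def dJ (b : ℕ → ℕ) (m N j : ℕ) : ℕ :=
  ((Finset.range m).filter fun i => b i = N + 1 - j).card

/-- `μ′_j = d_{j+1} + ⋯ + d_{N-k}`. -/
def muJ' (b : ℕ → ℕ) (m N k j : ℕ) : ℕ :=
  if j = 0 then 0 else ∑ j' ∈ Finset.Icc (j + 1) (N - k), dJ b m N j'

/-- `λ′_j = μ′_j + d_j`. -/
def lamJ' (b : ℕ → ℕ) (m N k j : ℕ) : ℕ :=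
  if j = 0 then 0 else muJ' b m N k j + dJ b m N j

/-- The conjugate (transpose) partition: `νᵗ_j = #{i : νᵢ ≥ j}`, for `ν` with at
most `k` parts. -/
def conjPart (k : ℕ) (nu : ℕ → ℕ) (j : ℕ) : ℕ :=
  if j = 0 then 0 else ((Finset.Icc 1 k).filter fun i => j ≤ nu i).card

/-- `wv` is the Grassmannian permutation of descent `k` and shape `nu`:
`wv(j) = j + ν_{k+1-j}` for `1 ≤ j ≤ k`, and `wv` is increasing on `{k+1,…,N}`. -/
def IsGrassOf (N k : ℕ) [NeZero N] (nu : ℕ → ℕ) (wv : Equiv.Perm (Fin N)) : Prop :=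
  (∀ j, 1 ≤ j → j ≤ k → val wv j = j + nu (k + 1 - j)) ∧
  (∀ j, k < j → j < N → val wv j < val wv (j + 1))

/-- Paths of length `m` in the `k`-Bruhat order from `w` to `w'` whose labels
increase strictly for the first `p` steps and decrease strictly thereafter
(positions `p, p+1, …, m` being decreasing, 1-indexed). -/
def IncDecPaths (N k m p : ℕ) [NeZero N] (w w' : Equiv.Perm (Fin N)) :
    Set ((ℕ → ℕ) × (ℕ → ℕ)) :=
  {ab | PathWit N k m w w' ab ∧
    (∀ i j, i < j → j < p → label w ab.1 ab.2 i < label w ab.1 ab.2 j) ∧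
    (∀ i j, p - 1 ≤ i → i < j → j < m → label w ab.1 ab.2 j < label w ab.1 ab.2 i)}

/-- Paths of length `m` in the `k`-Bruhat order from `w` to `w'` whose labels
decrease strictly for the first `q` steps and increase strictly thereafter. -/
def DecIncPaths (N k m q : ℕ) [NeZero N] (w w' : Equiv.Perm (Fin N)) :
    Set ((ℕ → ℕ) × (ℕ → ℕ)) :=
  {ab | PathWit N k m w w' ab ∧
    (∀ i j, i < j → j < q → label w ab.1 ab.2 j < label w ab.1 ab.2 i) ∧
    (∀ i j, q - 1 ≤ i → i < j → j < m → label w ab.1 ab.2 i < label w ab.1 ab.2 j)}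

/-!
Multiplication by a variable is given by Monk's rule: in `Hₙ`,
`x_k 𝔖_w = ∑_{c > k} 𝔖_{w t_{k,c}} - ∑_{c < k} 𝔖_{w t_{c,k}}`, the sums being over the `c` for
which the length goes up by one. Both sides are compatible with divided differences, so it is
enough to check `w = w₀`, where it says that `x_k` kills the staircase monomial.

To get from here to `h_m`, keep track of the `b`'s that have been used: let operators act on
functions of pairs `(w, B)`, where `T_{a,b}` takes the step `w ↦ w t_{a,b}` and `y_b` adds `b` to
`B` (and gives `0` if `b ∈ B`). With `D_a = ∑_{c > k} y_c T_{a,c}`, the product of the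
`(1 - D_a)⁻¹` over `a ≤ k` enumerates chains of steps grouped by their `a`'s. As no `b` is used
twice, `w' b` is fixed once `b` is used, so each `w'` with `w →_{r[k,m]} w'` is counted exactly
once. The relations among the `T_{a,b}` turn Monk's rule into the same recursion for this product as
`h_{m+1}(x₁,…,x_{k+1}) = h_{m+1}(x₁,…,x_k) + x_{k+1} h_m(x₁,…,x_{k+1})`.
-/

/-! ### Length -/

theorem swap_lt_swap_of_covBy {α : Type*} [LinearOrder α] [DecidableEq α] {p q i j : α}
    (hpq : p ⋖ q) (hij : i < j) (h : ¬(i = p ∧ j = q)) : swap p q i < swap p q j := by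
  have hlt := hpq.lt
  have hge : ∀ c, p < c → q ≤ c := fun c => hpq.ge_of_gt
  have hle : ∀ c, c < q → c ≤ p := fun c => hpq.le_of_lt
  simp only [swap_apply_def]
  grind

section Length

variable {N : ℕ}

theorem len_mul_swap_of_covBy (w : Perm (Fin N)) {p q : Fin N} (hpq : p ⋖ q) (hw : w p < w q) :
    len (w * swap p q) = len w + 1 := by
  have inversions_eq : (Finset.univ.filter fun x : Fin N × Fin N =>
      x.1 < x.2 ∧ (w * swap p q) x.2 < (w * swap p q) x.1) =
      insert (p, q) ((Finset.univ.filter fun x : Fin N × Fin N => x.1 < x.2 ∧ w x.2 < w x.1).map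
        ((swap p q).prodCongr (swap p q)).toEmbedding) := by
    ext ⟨i, j⟩
    rw [Finset.mem_insert, Finset.mem_map_equiv, Finset.mem_filter_univ, Finset.mem_filter_univ]
    simp only [prodCongr_symm, symm_swap, prodCongr_apply, Prod.map_apply, Prod.mk.injEq,
      Perm.mul_apply]
    constructor
    · rintro ⟨hij, hinv⟩
      by_cases h : i = p ∧ j = q
      · exact .inl h
      · exact .inr ⟨swap_lt_swap_of_covBy hpq hij h, hinv⟩
    · rintro (⟨rfl, rfl⟩ | ⟨hij, hinv⟩)
      · simpa only [swap_apply_left, swap_apply_right] using ⟨hpq.lt, hw⟩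
      · refine ⟨?_, hinv⟩
        have hne : ¬(swap p q i = p ∧ swap p q j = q) := by
          rintro ⟨hi, hj⟩
          exact hinv.not_gt (by rwa [hi, hj])
        simpa only [swap_apply_self] using swap_lt_swap_of_covBy hpq hij hne
  rw [len, inversions_eq, Finset.card_insert_of_notMem, Finset.card_map, len]
  simp [Finset.mem_map_equiv, hpq.lt.le]

theorem len_mul_swap_of_covBy_of_gt (w : Perm (Fin N)) {p q : Fin N} (hpq : p ⋖ q)
    (hw : w q < w p) : len (w * swap p q) + 1 = len w := by
  simpa [mul_assoc] using (len_mul_swap_of_covBy (w * swap p q) hpq (by simpa using hw)).symm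

theorem len_lt_len_mul_swap (w : Perm (Fin N)) {a b : Fin N} (hab : a < b) (hw : w a < w b) :
    len w < len (w * swap a b) := by
  obtain ⟨c, hac, hcb⟩ := exists_le_covBy_of_lt hab
  rcases hac.eq_or_lt with rfl | hac
  · simp [len_mul_swap_of_covBy w hcb hw]
  have hconj : w * swap a b = w * swap c b * swap a c * swap c b := by
    rw [mul_assoc, mul_assoc, ← mul_assoc (swap c b), swap_mul_swap_mul_swap hac.ne hab.ne,
      swap_comm b a]
  have ha : swap c b a = a := swap_apply_of_ne_of_ne hac.ne hab.ne
  have hstep : len (w * swap c b) < len (w * swap c b * swap a c) :=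
    len_lt_len_mul_swap (w * swap c b) hac (by simpa [ha] using hw)
  have hlast_c : (w * swap c b * swap a c) c = w a := by simp [ha]
  have hlast_b : (w * swap c b * swap a c) b = w c := by
    simp [swap_apply_of_ne_of_ne hab.ne' hcb.lt.ne']
  rw [hconj]
  rcases lt_trichotomy (w c) (w b) with hwc | hwc | hwc
  · have h₁ := len_mul_swap_of_covBy w hcb hwc
    rcases lt_trichotomy (w a) (w c) with hwa | hwa | hwa
    · have h₂ := len_mul_swap_of_covBy (w * swap c b * swap a c) hcb (by rwa [hlast_c, hlast_b])
      omega
    · exact absurd (w.injective hwa) hac.ne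
    · have h₂ := len_mul_swap_of_covBy_of_gt (w * swap c b * swap a c) hcb
        (by rwa [hlast_c, hlast_b])
      omega
  · exact absurd (w.injective hwc) hcb.lt.ne
  · have h₁ := len_mul_swap_of_covBy_of_gt w hcb hwc
    have h₂ := len_mul_swap_of_covBy (w * swap c b * swap a c) hcb
      (by rw [hlast_c, hlast_b]; exact hw.trans hwc)
    omega
termination_by (b : ℕ) - a
decreasing_by
  have := hcb.lt
  omega

theorem len_lt_len_mul_swap_iff_of_lt (w : Perm (Fin N)) {a b : Fin N} (hab : a < b) :
    len w < len (w * swap a b) ↔ w a < w b := by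
  refine ⟨fun h => ?_, len_lt_len_mul_swap w hab⟩
  by_contra hw
  have hlt : w b < w a := lt_of_le_of_ne (not_lt.1 hw) (w.injective.ne hab.ne')
  have := len_lt_len_mul_swap (w * swap a b) hab (by simpa using hlt)
  rw [mul_assoc, swap_mul_self, mul_one] at this
  omega

theorem len_lt_len_mul_swap_iff (w : Perm (Fin N)) {a b : Fin N} (hab : a ≠ b) :
    len w < len (w * swap a b) ↔ (a < b ↔ w a < w b) := by
  rcases hab.lt_or_gt with h | h
  · rw [len_lt_len_mul_swap_iff_of_lt w h, iff_true_left h]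
  · have hw : w a ≠ w b := w.injective.ne hab
    rw [swap_comm, len_lt_len_mul_swap_iff_of_lt w h, iff_false_left h.not_gt, not_lt,
      hw.symm.le_iff_lt]

theorem len_le_sq (w : Perm (Fin N)) : len w ≤ N * N := by
  simpa [len] using Finset.card_le_univ
    (Finset.univ.filter fun x : Fin N × Fin N => x.1 < x.2 ∧ w x.2 < w x.1)

end Length

/-! ### Divided differences -/

theorem swap_braid {α : Type*} [DecidableEq α] {p q r : α} (hpq : p ≠ q) (hqr : q ≠ r)
    (hpr : p ≠ r) : swap p q * swap q r * swap p q = swap q r * swap p q * swap q r := by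
  rw [swap_mul_swap_mul_swap hpq hpr, swap_comm p q, swap_comm q r,
    swap_mul_swap_mul_swap hqr.symm hpr.symm, swap_comm]

section DividedDifference

variable {σ R : Type*} [CommRing R]

theorem X_sub_X_ne_zero [Nontrivial R] {p q : σ} (h : p ≠ q) : (X p - X q : MvPolynomial σ R) ≠ 0 :=
  sub_ne_zero.2 fun e => h (X_injective e)

variable [DecidableEq σ]

theorem X_sub_X_dvd_sub_rename_swap (p q : σ) (f : MvPolynomial σ R) :
    (X p - X q) ∣ f - rename (swap p q) f := by
  induction f using MvPolynomial.induction_on with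
  | C a => simp
  | add f g hf hg =>
    rw [map_add, add_sub_add_comm]
    exact dvd_add hf hg
  | mul_X f i hf =>
    have hX : (X p - X q : MvPolynomial σ R) ∣ X i - X (swap p q i) := by
      rw [swap_apply_def]
      split_ifs with hp hq
      · rw [hp]
      · rw [hq, ← neg_sub, neg_dvd]
      · simp
    have split : f * X i - rename (swap p q) (f * X i) =
        (f - rename (swap p q) f) * X i + rename (swap p q) f * (X i - X (swap p q i)) := by
      rw [map_mul, rename_X]
      ring
    rw [split]
    exact dvd_add (hf.mul_right _) (hX.mul_left _)

theorem rename_swap_rename_swap (p q : σ) (f : MvPolynomial σ R) :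
    rename (swap p q) (rename (swap p q) f) = f := by
  rw [rename_rename, ← Perm.coe_mul, swap_mul_self, Perm.coe_one, rename_id_apply]

variable [IsDomain R]

/-- The divided difference `f ↦ (f - s·f) / (x_p - x_q)`, where `s` interchanges the variables
`x_p` and `x_q`, as a linear map; it is `0` when `p = q`. -/
noncomputable def dividedDiff (p q : σ) : MvPolynomial σ R →ₗ[R] MvPolynomial σ R :=
  if h : p = q then 0 else
  { toFun f := (X_sub_X_dvd_sub_rename_swap p q f).choose
    map_add' f g := by
      refine mul_left_cancel₀ (X_sub_X_ne_zero (R := R) h) ?_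
      rw [mul_add, ← (X_sub_X_dvd_sub_rename_swap p q _).choose_spec,
        ← (X_sub_X_dvd_sub_rename_swap p q f).choose_spec,
        ← (X_sub_X_dvd_sub_rename_swap p q g).choose_spec, map_add]
      ring
    map_smul' r f := by
      refine mul_left_cancel₀ (X_sub_X_ne_zero (R := R) h) ?_
      rw [RingHom.id_apply, mul_smul_comm, ← (X_sub_X_dvd_sub_rename_swap p q _).choose_spec,
        ← (X_sub_X_dvd_sub_rename_swap p q f).choose_spec, map_smul, smul_sub] }

theorem X_sub_X_mul_dividedDiff (p q : σ) (f : MvPolynomial σ R) :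
    (X p - X q) * dividedDiff p q f = f - rename (swap p q) f := by
  by_cases h : p = q
  · simp [h]
  · rw [dividedDiff, dif_neg h]
    exact (X_sub_X_dvd_sub_rename_swap p q f).choose_spec.symm

theorem dividedDiff_eq_of_mul_eq {p q : σ} (h : p ≠ q) {f g : MvPolynomial σ R}
    (hg : (X p - X q) * g = f - rename (swap p q) f) : dividedDiff p q f = g :=
  mul_left_cancel₀ (X_sub_X_ne_zero h) (by rw [X_sub_X_mul_dividedDiff, hg])

@[simp]
theorem dividedDiff_self (p : σ) : dividedDiff (R := R) p p = 0 :=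
  dif_pos rfl

theorem dividedDiff_mul (p q : σ) (f g : MvPolynomial σ R) :
    dividedDiff p q (f * g) =
      dividedDiff p q f * g + rename (swap p q) f * dividedDiff p q g := by
  by_cases h : p = q
  · simp [h]
  · refine dividedDiff_eq_of_mul_eq h ?_
    rw [map_mul]
    linear_combination g * X_sub_X_mul_dividedDiff p q f +
      rename (swap p q) f * X_sub_X_mul_dividedDiff p q g

theorem dividedDiff_eq_zero {p q : σ} {f : MvPolynomial σ R}
    (hf : rename (swap p q) f = f) : dividedDiff p q f = 0 := by
  by_cases h : p = q
  · simp [h]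
  · exact dividedDiff_eq_of_mul_eq h (by rw [hf, mul_zero, sub_self])

theorem rename_swap_dividedDiff (p q : σ) (f : MvPolynomial σ R) :
    rename (swap p q) (dividedDiff p q f) = dividedDiff p q f := by
  by_cases h : p = q
  · simp [h]
  · have hspec := congrArg (rename (swap p q)) (X_sub_X_mul_dividedDiff p q f)
    rw [map_mul, map_sub, map_sub, rename_swap_rename_swap, rename_X, rename_X, swap_apply_left,
      swap_apply_right] at hspec
    exact (dividedDiff_eq_of_mul_eq h (by linear_combination -hspec)).symm

theorem dividedDiff_dividedDiff (p q : σ) (f : MvPolynomial σ R) :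
    dividedDiff p q (dividedDiff p q f) = 0 :=
  dividedDiff_eq_zero (rename_swap_dividedDiff p q f)

theorem dividedDiff_swap (p q : σ) (f : MvPolynomial σ R) :
    dividedDiff q p f = -dividedDiff p q f := by
  by_cases h : p = q
  · simp [h]
  · refine dividedDiff_eq_of_mul_eq (Ne.symm h) ?_
    rw [swap_comm]
    linear_combination X_sub_X_mul_dividedDiff p q f

theorem mul_dividedDiff_dividedDiff {p q r s : σ} (hpr : p ≠ r) (hps : p ≠ s) (hqr : q ≠ r)
    (hqs : q ≠ s) (f : MvPolynomial σ R) :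
    (X p - X q) * (X r - X s) * dividedDiff p q (dividedDiff r s f) =
      f - rename (swap p q) f - rename (swap r s) f + rename (swap p q * swap r s) f := by
  have outer := X_sub_X_mul_dividedDiff p q (dividedDiff r s f)
  have inner := X_sub_X_mul_dividedDiff r s f
  have inner_swapped := congrArg (rename (swap p q)) inner
  rw [map_mul, map_sub, map_sub, rename_X, rename_X, swap_apply_of_ne_of_ne hpr.symm hqr.symm,
    swap_apply_of_ne_of_ne hps.symm hqs.symm, rename_rename, ← Perm.coe_mul] at inner_swapped
  linear_combination (X r - X s) * outer + inner - inner_swapped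

theorem dividedDiff_comm {p q r s : σ} (hpr : p ≠ r) (hps : p ≠ s) (hqr : q ≠ r) (hqs : q ≠ s)
    (f : MvPolynomial σ R) :
    dividedDiff p q (dividedDiff r s f) = dividedDiff r s (dividedDiff p q f) := by
  rcases eq_or_ne p q with rfl | hpq
  · simp
  rcases eq_or_ne r s with rfl | hrs
  · simp
  have hcomm : swap p q * swap r s = swap r s * swap p q :=
    (Perm.disjoint_swap_swap (by simp [*])).commute.eq
  have h₁ := mul_dividedDiff_dividedDiff hpr hps hqr hqs f
  have h₂ := mul_dividedDiff_dividedDiff hpr.symm hqr.symm hps.symm hqs.symm f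
  refine mul_left_cancel₀ (mul_ne_zero (X_sub_X_ne_zero hpq) (X_sub_X_ne_zero hrs)) ?_
  rw [← hcomm] at h₂
  linear_combination h₁ - h₂

/-- The right-hand side is the antisymmetrization of `f` in `x_p, x_q, x_r`, which up to sign does
not see the order of the three variables: this is why the braid relation holds. -/
theorem mul_dividedDiff_braid {p q r : σ} (hpq : p ≠ q) (hqr : q ≠ r) (hpr : p ≠ r)
    (f : MvPolynomial σ R) :
    (X p - X q) * (X q - X r) * (X p - X r) *
        dividedDiff p q (dividedDiff q r (dividedDiff p q f)) =
      f - rename (swap p q) f - rename (swap q r) f + rename (swap q r * swap p q) f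
        + rename (swap p q * swap q r) f - rename (swap p q * swap q r * swap p q) f := by
  set g := dividedDiff p q f
  set h := dividedDiff q r g
  have spec_f : (X p - X q) * g = f - rename (swap p q) f := X_sub_X_mul_dividedDiff p q f
  have spec_f_qr := congrArg (rename (swap q r)) spec_f
  rw [map_mul, map_sub, map_sub, rename_X, rename_X, swap_apply_of_ne_of_ne hpq hpr,
    swap_apply_left] at spec_f_qr
  have spec_f_pq_qr := congrArg (rename (swap p q)) spec_f_qr
  rw [map_mul, map_sub, map_sub, rename_X, rename_X, swap_apply_left,
    swap_apply_of_ne_of_ne hpr.symm hqr.symm] at spec_f_pq_qr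
  have spec_g : (X q - X r) * h = g - rename (swap q r) g := X_sub_X_mul_dividedDiff q r g
  have spec_g_pq := congrArg (rename (swap p q)) spec_g
  rw [map_mul, map_sub, map_sub, rename_X, rename_X, swap_apply_right,
    swap_apply_of_ne_of_ne hpr.symm hqr.symm, rename_swap_dividedDiff] at spec_g_pq
  have spec_h := X_sub_X_mul_dividedDiff p q h
  simp only [Perm.coe_mul, ← rename_rename]
  refine mul_left_cancel₀ (X_sub_X_ne_zero hpq) ?_
  linear_combination (X p - X q) * (X q - X r) * (X p - X r) * spec_h +
    (X p - X q) * (X p - X r) * spec_g - (X p - X q) * (X q - X r) * spec_g_pq +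
    (X p - X q) * spec_f - (X p - X q) * spec_f_qr + (X p - X q) * spec_f_pq_qr

theorem dividedDiff_braid {p q r : σ} (hpq : p ≠ q) (hqr : q ≠ r) (hpr : p ≠ r)
    (f : MvPolynomial σ R) :
    dividedDiff p q (dividedDiff q r (dividedDiff p q f)) =
      dividedDiff q r (dividedDiff p q (dividedDiff q r f)) := by
  have h₁ := mul_dividedDiff_braid hpq hqr hpr f
  have h₂ := mul_dividedDiff_braid hqr.symm hpq.symm hpr.symm f
  rw [swap_comm r q, swap_comm q p, ← swap_braid hpq hqr hpr] at h₂
  simp only [dividedDiff_swap q r, dividedDiff_swap p q, map_neg, neg_neg] at h₂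
  refine mul_left_cancel₀ (mul_ne_zero (mul_ne_zero (X_sub_X_ne_zero hpq) (X_sub_X_ne_zero hqr))
    (X_sub_X_ne_zero hpr)) ?_
  linear_combination h₁ - h₂

theorem dividedDiff_X {p q : σ} (h : p ≠ q) (k : σ) :
    dividedDiff p q (X k : MvPolynomial σ R) = if k = p then 1 else if k = q then -1 else 0 := by
  apply dividedDiff_eq_of_mul_eq h
  rw [rename_X]
  split_ifs with h₁ h₂
  · simp [h₁]
  · simp [h₂]
  · simp [swap_apply_of_ne_of_ne h₁ h₂]

end DividedDifference

theorem dividedDiff_mem_symIdeal {N : ℕ} (p q : Fin N) {f : MvPolynomial (Fin N) ℤ}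
    (hf : f ∈ symIdeal N) : dividedDiff p q f ∈ symIdeal N := by
  induction hf using Submodule.span_induction with
  | mem f hf => rw [dividedDiff_eq_zero (hf.1 _)]; exact zero_mem _
  | zero => rw [map_zero]; exact zero_mem _
  | add f g _ _ hf hg => rw [map_add]; exact add_mem hf hg
  | smul a f hf hdf =>
    rw [smul_eq_mul, dividedDiff_mul]
    exact add_mem (Ideal.mul_mem_left _ _ hf) (Ideal.mul_mem_left _ _ hdf)

/-! ### Reduced words and Schubert polynomials -/

theorem eq_one_of_strictMono {α : Type*} [LinearOrder α] [WellFoundedLT α] {e : Perm α}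
    (h : StrictMono e) : e = 1 :=
  DFunLike.coe_injective <|
    (StrictMono.range_inj h strictMono_id).1 (by rw [e.range_eq_univ, Set.range_id])

section ReducedWord

variable {N : ℕ}

theorem eq_one_of_forall_covBy {w : Perm (Fin N)} (h : ∀ p q, p ⋖ q → w p < w q) : w = 1 :=
  eq_one_of_strictMono ((strictMono_iff_forall_covBy _).2 h)

theorem w0_mul_w0 : w0 N * w0 N = 1 := by
  ext x
  simp [w0]

theorem eq_w0_of_forall_covBy {w : Perm (Fin N)} (h : ∀ p q, p ⋖ q → w q < w p) : w = w0 N := by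
  have hone : w0 N * w = 1 := eq_one_of_forall_covBy fun p q hpq => Fin.rev_lt_rev.2 (h p q hpq)
  exact mul_left_cancel (hone.trans w0_mul_w0.symm)

theorem exists_covBy_val_add_one_eq {i : ℕ} (hi : i ∈ (List.range (N - 1)).map (· + 1)) :
    ∃ p q : Fin N, p ⋖ q ∧ (p : ℕ) + 1 = i := by
  simp only [List.mem_map, List.mem_range] at hi
  obtain ⟨j, hj, rfl⟩ := hi
  exact ⟨⟨j, by omega⟩, ⟨j + 1, by omega⟩, Fin.covBy_iff.2 (Nat.covBy_iff_add_one_eq.2 rfl), rfl⟩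

variable [NeZero N]

theorem pos_val_add_one (x : Fin N) : pos N (x + 1) = x := by
  ext
  simp [pos, Nat.mod_eq_of_lt x.2]

theorem pos_val_add_two {p q : Fin N} (hpq : p ⋖ q) : pos N (p + 1 + 1) = q := by
  rw [Nat.covBy_iff_add_one_eq.1 hpq.coe_fin, pos_val_add_one]

theorem t_val_add_one {p q : Fin N} (hpq : p ⋖ q) : t N (p + 1) (p + 1 + 1) = swap p q := by
  rw [t, pos_val_add_one, pos_val_add_two hpq]

theorem val_lt_val_iff_of_covBy (w : Perm (Fin N)) {p q : Fin N} (hpq : p ⋖ q) :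
    val w (p + 1 + 1) < val w (p + 1) ↔ w q < w p := by
  rw [val, val, pos_val_add_one, pos_val_add_two hpq, Nat.add_lt_add_iff_right, Fin.lt_def]

theorem divDiff_of_covBy {p q : Fin N} (hpq : p ⋖ q) (f : MvPolynomial (Fin N) ℤ) :
    divDiff (p + 1) f = dividedDiff p q f := by
  have hdvd : X (pos N (p + 1)) - X (pos N (p + 1 + 1)) ∣
      f - rename (t N (p + 1) (p + 1 + 1)) f := by
    rw [t_val_add_one hpq, pos_val_add_one, pos_val_add_two hpq]
    exact X_sub_X_dvd_sub_rename_swap p q f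
  have hmul := hdvd.choose_spec
  rw [divDiff, dif_pos hdvd]
  generalize hdvd.choose = g at hmul ⊢
  rw [t_val_add_one hpq, pos_val_add_one, pos_val_add_two hpq] at hmul
  exact (dividedDiff_eq_of_mul_eq hpq.lt.ne hmul.symm).symm

/-- The operator `∂_w` along the reduced word chosen by `redWord`. -/
noncomputable def permDivDiff (w : Perm (Fin N)) (f : MvPolynomial (Fin N) ℤ) :
    MvPolynomial (Fin N) ℤ :=
  divDiffWord (redWord N w) f

theorem redWordAux_one (fuel : ℕ) : redWordAux N fuel 1 = [] := by
  cases fuel with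
  | zero => rfl
  | succ fuel =>
    rw [redWordAux]
    split
    · rfl
    · next i hi =>
      obtain ⟨p, q, hpq, rfl⟩ := exists_covBy_val_add_one_eq (List.mem_of_find?_eq_some hi)
      have hdesc : val (1 : Perm (Fin N)) (p + 1 + 1) < val (1 : Perm (Fin N)) (p + 1) := by
        simpa only [decide_eq_true_eq] using List.find?_some hi
      exact absurd ((val_lt_val_iff_of_covBy 1 hpq).1 hdesc) hpq.lt.not_gt

theorem exists_descent_redWordAux {w : Perm (Fin N)} (hw : w ≠ 1) :
    ∃ p q, p ⋖ q ∧ w q < w p ∧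
      ∀ fuel, redWordAux N (fuel + 1) w = redWordAux N fuel (w * swap p q) ++ [(p : ℕ) + 1] := by
  cases hfind : ((List.range (N - 1)).map (· + 1)).find?
      (fun i => decide (val w (i + 1) < val w i)) with
  | none =>
    refine absurd (eq_one_of_forall_covBy fun p q hpq => ?_) hw
    have hq := Nat.covBy_iff_add_one_eq.1 hpq.coe_fin
    have hmem : (p : ℕ) + 1 ∈ (List.range (N - 1)).map (· + 1) :=
      List.mem_map_of_mem (List.mem_range.2 (by omega))
    have hasc := List.find?_eq_none.1 hfind _ hmem
    rw [decide_eq_true_iff, val_lt_val_iff_of_covBy w hpq, not_lt] at hasc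
    exact hasc.lt_of_ne (w.injective.ne hpq.lt.ne)
  | some i =>
    obtain ⟨p, q, hpq, rfl⟩ := exists_covBy_val_add_one_eq (List.mem_of_find?_eq_some hfind)
    have hdesc : val w (p + 1 + 1) < val w (p + 1) := by
      simpa only [decide_eq_true_eq] using List.find?_some hfind
    refine ⟨p, q, hpq, (val_lt_val_iff_of_covBy w hpq).1 hdesc, fun fuel => ?_⟩
    simp only [redWordAux, hfind, t_val_add_one hpq]

theorem redWordAux_eq_of_len_le (w : Perm (Fin N)) {f g : ℕ} (hf : len w ≤ f) (hg : len w ≤ g) :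
    redWordAux N f w = redWordAux N g w := by
  rcases eq_or_ne w 1 with rfl | hw
  · rw [redWordAux_one, redWordAux_one]
  obtain ⟨p, q, hpq, hdesc, h⟩ := exists_descent_redWordAux hw
  have hlen := len_mul_swap_of_covBy_of_gt w hpq hdesc
  obtain ⟨f, rfl⟩ : ∃ f', f = f' + 1 := ⟨f - 1, by omega⟩
  obtain ⟨g, rfl⟩ : ∃ g', g = g' + 1 := ⟨g - 1, by omega⟩
  rw [h, h, redWordAux_eq_of_len_le (w * swap p q) (f := f) (g := g) (by omega) (by omega)]
termination_by len w

theorem permDivDiff_one (f : MvPolynomial (Fin N) ℤ) : permDivDiff (1 : Perm (Fin N)) f = f := by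
  rw [permDivDiff, redWord, redWordAux_one, divDiffWord, List.foldr_nil]

theorem exists_descent_permDivDiff {w : Perm (Fin N)} (hw : w ≠ 1) :
    ∃ p q, p ⋖ q ∧ w q < w p ∧
      ∀ f, permDivDiff w f = permDivDiff (w * swap p q) (dividedDiff p q f) := by
  obtain ⟨p, q, hpq, hdesc, h⟩ := exists_descent_redWordAux hw
  refine ⟨p, q, hpq, hdesc, fun f => ?_⟩
  have hlen := len_mul_swap_of_covBy_of_gt w hpq hdesc
  have hle := len_le_sq w
  obtain ⟨g, hg⟩ : ∃ g, N * N = g + 1 := ⟨N * N - 1, by omega⟩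
  have hword : redWord N w = redWord N (w * swap p q) ++ [(p : ℕ) + 1] := by
    rw [redWord, redWord, hg, h g,
      redWordAux_eq_of_len_le (w * swap p q) (f := g) (g := g + 1) (by omega) (by omega)]
  simp only [permDivDiff, hword, divDiffWord, List.foldr_append, List.foldr_cons, List.foldr_nil,
    divDiff_of_covBy hpq]

/-- `∂_w = ∂_{w s} ∂_s` for every descent `s` of `w`, not only for the one chosen by `redWord`. -/
def DescentRule (w : Perm (Fin N)) : Prop :=
  ∀ p q f, p ⋖ q → w q < w p →
    permDivDiff w f = permDivDiff (w * swap p q) (dividedDiff p q f)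

theorem permDivDiff_eq_of_covBy_of_covBy {w : Perm (Fin N)}
    (ih : ∀ u : Perm (Fin N), len u < len w → DescentRule u) {p q r : Fin N} (hpq : p ⋖ q)
    (hqr : q ⋖ r) (hdpq : w q < w p) (hdqr : w r < w q) (f : MvPolynomial (Fin N) ℤ) :
    permDivDiff (w * swap p q) (dividedDiff p q f) =
      permDivDiff (w * swap q r) (dividedDiff q r f) := by
  have hne_pq := hpq.lt.ne
  have hne_qr := hqr.lt.ne
  have hne_pr := (hpq.lt.trans hqr.lt).ne
  have len₁ := len_mul_swap_of_covBy_of_gt w hpq hdpq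
  have len₂ := len_mul_swap_of_covBy_of_gt w hqr hdqr
  have d₁ : (w * swap p q) r < (w * swap p q) q := by
    simpa [swap_apply_of_ne_of_ne hne_pr.symm hne_qr.symm] using hdqr.trans hdpq
  have d₂ : (w * swap q r) q < (w * swap q r) p := by
    simpa [swap_apply_of_ne_of_ne hne_pq hne_pr] using hdqr.trans hdpq
  have len₃ := len_mul_swap_of_covBy_of_gt _ hqr d₁
  have len₄ := len_mul_swap_of_covBy_of_gt _ hpq d₂
  have d₃ : (w * swap p q * swap q r) q < (w * swap p q * swap q r) p := by
    simpa [swap_apply_of_ne_of_ne, hne_pq, hne_pr, hne_pr.symm, hne_qr.symm] using hdqr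
  have d₄ : (w * swap q r * swap p q) r < (w * swap q r * swap p q) q := by
    simpa [swap_apply_of_ne_of_ne, hne_pq, hne_pr, hne_pr.symm, hne_qr.symm] using hdpq
  rw [ih (w * swap p q) (by omega) q r _ hqr d₁, ih (w * swap q r) (by omega) p q _ hpq d₂,
    ih (w * swap p q * swap q r) (by omega) p q _ hpq d₃,
    ih (w * swap q r * swap p q) (by omega) q r _ hqr d₄, dividedDiff_braid hne_pq hne_qr hne_pr]
  congr 1
  simpa only [mul_assoc] using congrArg (w * ·) (swap_braid hne_pq hne_qr hne_pr)

theorem permDivDiff_eq_of_disjoint {w : Perm (Fin N)}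
    (ih : ∀ u : Perm (Fin N), len u < len w → DescentRule u) {p q r s : Fin N} (hpq : p ⋖ q)
    (hrs : r ⋖ s) (hdpq : w q < w p) (hdrs : w s < w r) (hpr : p ≠ r) (hps : p ≠ s) (hqr : q ≠ r)
    (hqs : q ≠ s) (f : MvPolynomial (Fin N) ℤ) :
    permDivDiff (w * swap p q) (dividedDiff p q f) =
      permDivDiff (w * swap r s) (dividedDiff r s f) := by
  have len₁ := len_mul_swap_of_covBy_of_gt w hpq hdpq
  have len₂ := len_mul_swap_of_covBy_of_gt w hrs hdrs
  have hcomm : swap p q * swap r s = swap r s * swap p q :=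
    (Perm.disjoint_swap_swap (by simp [*, hpq.lt.ne, hrs.lt.ne])).commute.eq
  rw [ih (w * swap p q) (by omega) r s _ hrs (by simp [swap_apply_of_ne_of_ne, *, Ne.symm]),
    ih (w * swap r s) (by omega) p q _ hpq (by simp [swap_apply_of_ne_of_ne, *]),
    dividedDiff_comm hpr hps hqr hqs, mul_assoc, hcomm, mul_assoc]

theorem descentRule (w : Perm (Fin N)) : DescentRule w := by
  have ih : ∀ u : Perm (Fin N), len u < len w → DescentRule u := fun u _ => descentRule u
  intro p q f hpq hdesc
  have hw : w ≠ 1 := by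
    rintro rfl
    exact hpq.lt.not_gt hdesc
  obtain ⟨r, s, hrs, hdesc', h⟩ := exists_descent_permDivDiff hw
  rw [h]
  rcases eq_or_ne r p with rfl | hrp
  · rw [hrs.unique_right hpq]
  rcases eq_or_ne s p with rfl | hsp
  · exact permDivDiff_eq_of_covBy_of_covBy ih hrs hpq hdesc' hdesc f
  rcases eq_or_ne r q with rfl | hrq
  · exact (permDivDiff_eq_of_covBy_of_covBy ih hpq hrs hdesc hdesc' f).symm
  · exact permDivDiff_eq_of_disjoint ih hrs hpq hdesc' hdesc hrp hrq hsp
      (fun hsq => hrp (hrs.unique_left (hsq ▸ hpq))) f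
termination_by len w

theorem permDivDiff_swap_mul (u : Perm (Fin N)) {x y : Fin N} (hxy : x ⋖ y)
    (hu : u⁻¹ x < u⁻¹ y) (f : MvPolynomial (Fin N) ℤ) :
    permDivDiff (swap x y * u) f = dividedDiff x y (permDivDiff u f) := by
  rcases eq_or_ne u 1 with rfl | hone
  · rw [permDivDiff_one, mul_one, descentRule (swap x y) x y f hxy (by simpa using hxy.lt),
      swap_mul_self, permDivDiff_one]
  obtain ⟨p, q, hpq, hdesc, h⟩ := exists_descent_permDivDiff hone
  have hdesc' : (swap x y * u) q < (swap x y * u) p :=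
    swap_lt_swap_of_covBy hxy hdesc fun ⟨hq, hp⟩ =>
      hpq.lt.not_gt (by simpa [← hq, ← hp] using hu)
  have hu' : (u * swap p q)⁻¹ x < (u * swap p q)⁻¹ y := by
    rw [mul_inv_rev, swap_inv]
    exact swap_lt_swap_of_covBy hpq hu fun ⟨hx, hy⟩ =>
      hxy.lt.not_gt (by simpa [← hx, ← hy] using hdesc)
  rw [descentRule (swap x y * u) p q f hpq hdesc', mul_assoc,
    permDivDiff_swap_mul (u * swap p q) hxy hu', h]
termination_by len u
decreasing_by exact Nat.lt_of_succ_le (len_mul_swap_of_covBy_of_gt u hpq hdesc).le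

theorem dividedDiff_schubertPoly_of_gt (w : Perm (Fin N)) {p q : Fin N} (hpq : p ⋖ q)
    (h : w q < w p) : dividedDiff p q (schubertPoly N w) = schubertPoly N (w * swap p q) := by
  have hw : (w⁻¹ * w0 N)⁻¹ = w0 N * w := by
    rw [mul_inv_rev, inv_inv, inv_eq_of_mul_eq_one_right w0_mul_w0]
  have key := permDivDiff_swap_mul (w⁻¹ * w0 N) hpq (by rw [hw]; exact Fin.rev_lt_rev.2 h)
    (staircase N)
  rw [schubertPoly, schubertPoly, mul_inv_rev, swap_inv, mul_assoc]
  exact key.symm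

theorem dividedDiff_schubertPoly_of_lt (w : Perm (Fin N)) {p q : Fin N} (hpq : p ⋖ q)
    (h : w p < w q) : dividedDiff p q (schubertPoly N w) = 0 := by
  have key := dividedDiff_schubertPoly_of_gt (w * swap p q) hpq (by simpa using h)
  rw [mul_assoc, swap_mul_self, mul_one] at key
  rw [← key, dividedDiff_dividedDiff]

theorem schubertPoly_w0 : schubertPoly N (w0 N) = staircase N := by
  rw [schubertPoly, inv_mul_cancel]
  exact permDivDiff_one _

end ReducedWord

/-! ### Complete homogeneous polynomials and the coinvariant ideal -/

theorem sum_sym_insert {α M : Type*} [DecidableEq α] [AddCommMonoid M] {s : Finset α} {a : α}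
    (ha : a ∉ s) (m : ℕ) (f : Sym α (m + 1) → M) :
    ∑ z ∈ (insert a s).sym (m + 1), f z =
      ∑ z ∈ s.sym (m + 1), f z + ∑ z ∈ (insert a s).sym m, f (a ::ₛ z) := by
  rw [← Finset.sum_image (g := fun z => a ::ₛ z) (f := f)
    fun z _ z' _ h => (Sym.cons_inj_right a z z').1 h, ← Finset.sum_union]
  · congr 1
    ext z
    simp only [Finset.mem_union, Finset.mem_image, Finset.mem_sym_iff, Finset.mem_insert]
    constructor
    · intro hz
      by_cases haz : a ∈ z
      · refine .inr ⟨z.erase a haz, fun b hb => hz b ?_, Sym.cons_erase haz⟩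
        exact Multiset.mem_of_mem_erase hb
      · exact .inl fun b hb => (hz b hb).resolve_left fun hba => haz (hba ▸ hb)
    · rintro (hz | ⟨z, hz, rfl⟩) b hb
      · exact .inr (hz b hb)
      · exact (Sym.mem_cons.1 hb).elim .inl (hz b)
  · refine Finset.disjoint_left.2 fun z hz hz' => ha ?_
    obtain ⟨z, -, rfl⟩ := Finset.mem_image.1 hz'
    exact Finset.mem_sym_iff.1 hz a (Sym.mem_cons_self a z)

section CompleteHomogeneous

variable {N : ℕ}

theorem filter_lt_val_add_one (a : Fin N) :
    (Finset.univ.filter fun i : Fin N => (i : ℕ) < a + 1) =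
      insert a (Finset.univ.filter fun i : Fin N => (i : ℕ) < a) := by
  ext i
  simp only [Finset.mem_filter_univ, Finset.mem_insert, Nat.lt_succ_iff_lt_or_eq, or_comm,
    Fin.ext_iff]

theorem hPoly_zero_right (k : ℕ) : hPoly N k 0 = 1 :=
  Finset.sum_singleton _ _

theorem hPoly_zero_left (m : ℕ) : hPoly N 0 (m + 1) = 0 := by
  simp [hPoly]

theorem hPoly_succ_succ (a : Fin N) (m : ℕ) :
    hPoly N (a + 1) (m + 1) = hPoly N a (m + 1) + X a * hPoly N (a + 1) m := by
  simp only [hPoly, Finset.mul_sum, filter_lt_val_add_one]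
  rw [sum_sym_insert (by simp)]
  simp only [Sym.coe_cons, Multiset.map_cons, Multiset.prod_cons]

theorem hPoly_of_le {k : ℕ} (hk : N ≤ k) (m : ℕ) : hPoly N k m = hsymm (Fin N) ℤ m := by
  have huniv : (Finset.univ.filter fun i : Fin N => (i : ℕ) < k) = Finset.univ :=
    Finset.filter_true_of_mem fun i _ => i.2.trans_le hk
  rw [hPoly, hsymm, huniv, Finset.sym_univ]
  rfl

theorem constantCoeff_hPoly_succ (k m : ℕ) : constantCoeff (hPoly N k (m + 1)) = 0 := by
  refine (map_sum constantCoeff _ _).trans (Finset.sum_eq_zero fun z _ => ?_)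
  obtain ⟨a, z, rfl⟩ := Sym.exists_eq_cons_of_succ z
  simp only [Sym.coe_cons, Multiset.map_cons, Multiset.prod_cons, map_mul, constantCoeff_X,
    zero_mul]

theorem hPoly_mem_symIdeal {k m : ℕ} (hk : k ≤ N) (hm : N < k + m) :
    hPoly N k m ∈ symIdeal N := by
  obtain ⟨m, rfl⟩ : ∃ m', m = m' + 1 := ⟨m - 1, by omega⟩
  induction hk using Nat.decreasingInduction generalizing m with
  | self =>
    refine Ideal.subset_span ⟨?_, constantCoeff_hPoly_succ N m⟩
    rw [hPoly_of_le le_rfl]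
    exact hsymm_isSymmetric _ _ _
  | of_succ k hk ih =>
    have hrec := hPoly_succ_succ ⟨k, hk⟩ m
    rw [← sub_eq_iff_eq_add] at hrec
    rw [← hrec]
    obtain ⟨m, rfl⟩ : ∃ m', m = m' + 1 := ⟨m - 1, by omega⟩
    exact sub_mem (ih _ (by omega)) (Ideal.mul_mem_left _ _ (ih _ (by omega)))

theorem hPoly_succ_sub_X_pow_mem {J : Ideal (MvPolynomial (Fin N) ℤ)} (a : Fin N)
    (hJ : ∀ j < a, X j ∈ J) (m : ℕ) : hPoly N (a + 1) m - X a ^ m ∈ J := by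
  have hmem : ∀ m, hPoly N a (m + 1) ∈ J := fun m => by
    refine Ideal.sum_mem _ fun z hz => ?_
    obtain ⟨j, z, rfl⟩ := Sym.exists_eq_cons_of_succ z
    have hj := Finset.mem_sym_iff.1 hz j (Sym.mem_cons_self j z)
    rw [Sym.coe_cons, Multiset.map_cons, Multiset.prod_cons]
    exact Ideal.mul_mem_right _ _ (hJ j (by simpa using hj))
  induction m with
  | zero => rw [hPoly_zero_right, pow_zero, sub_self]; exact J.zero_mem
  | succ m ih =>
    have hsplit : hPoly N (a + 1) (m + 1) - X a ^ (m + 1) =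
        hPoly N a (m + 1) + X a * (hPoly N (a + 1) m - X a ^ m) := by
      rw [hPoly_succ_succ]
      ring
    rw [hsplit]
    exact add_mem (hmem m) (Ideal.mul_mem_left _ _ ih)

/-- The part `x₁^{N-1} ⋯ x_k^{N-k}` of the staircase monomial. -/
noncomputable def partialStaircase (N k : ℕ) : MvPolynomial (Fin N) ℤ :=
  ∏ i ∈ Finset.univ.filter (fun i : Fin N => (i : ℕ) < k), X i ^ (N - 1 - (i : ℕ))

theorem partialStaircase_succ (a : Fin N) :
    partialStaircase N (a + 1) = X a ^ (N - 1 - (a : ℕ)) * partialStaircase N a := by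
  rw [partialStaircase, filter_lt_val_add_one, Finset.prod_insert (by simp), partialStaircase]

theorem X_mul_partialStaircase_mem {k : ℕ} (hk : k ≤ N) {j : Fin N} (hj : (j : ℕ) < k) :
    X j * partialStaircase N k ∈ symIdeal N := by
  induction k generalizing j with
  | zero => exact absurd hj (Nat.not_lt_zero _)
  | succ k ih =>
    obtain ⟨a, rfl⟩ : ∃ a : Fin N, (a : ℕ) = k := ⟨⟨k, hk⟩, rfl⟩
    rw [partialStaircase_succ]
    rcases Nat.lt_succ_iff_lt_or_eq.1 hj with hja | hja
    · rw [mul_left_comm]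
      exact Ideal.mul_mem_left _ _ (ih a.2.le hja)
    · obtain rfl : j = a := Fin.ext hja
      -- modulo the annihilator of the partial staircase, `x_a^{N-a}` is `h_{N-a}(x₁,…,x_{a+1}) ≡ 0`
      have hcolon := hPoly_succ_sub_X_pow_mem (J := (symIdeal N).colon {partialStaircase N j}) j
        (fun i hi => Submodule.mem_colon_singleton.2 (ih j.2.le hi)) (N - j)
      rw [Submodule.mem_colon_singleton, smul_eq_mul, sub_mul] at hcolon
      have hmem : hPoly N (j + 1) (N - j) * partialStaircase N j ∈ symIdeal N :=
        Ideal.mul_mem_right _ _ (hPoly_mem_symIdeal hk (by omega))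
      rw [← mul_assoc, ← pow_succ', show N - 1 - (j : ℕ) + 1 = N - j by omega]
      exact ((symIdeal N).sub_mem_iff_right hmem).1 hcolon

theorem X_mul_staircase_mem (j : Fin N) : X j * staircase N ∈ symIdeal N := by
  have hfull : partialStaircase N N = staircase N := by
    rw [partialStaircase, staircase, Finset.filter_true_of_mem fun i _ => i.2]
  exact hfull ▸ X_mul_partialStaircase_mem le_rfl j.2

end CompleteHomogeneous

/-! ### Monk's rule -/

section Monk

variable {N : ℕ}

/-- The coefficient `±1` or `0` of `𝔖_{w t_{k,j}}` in Monk's expansion of `x_k 𝔖_w`. -/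
def monkCoeff (w : Perm (Fin N)) (k j : Fin N) : ℤ :=
  if len (w * swap k j) = len w + 1 then if k < j then 1 else -1 else 0

theorem monkCoeff_self (w : Perm (Fin N)) (k : Fin N) : monkCoeff w k k = 0 := by
  rw [monkCoeff, swap_self, ← Perm.one_def, mul_one, if_neg (by omega)]

theorem monkCoeff_of_lt_of_covBy {w : Perm (Fin N)} {p q : Fin N} (hpq : p ⋖ q) (h : w q < w p) :
    monkCoeff w p q = 0 ∧ monkCoeff w q p = 0 := by
  have hlen := len_mul_swap_of_covBy_of_gt w hpq h
  exact ⟨if_neg (by omega), if_neg (by rw [swap_comm]; omega)⟩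

theorem monkCoeff_of_covBy {w : Perm (Fin N)} {p q : Fin N} (hpq : p ⋖ q) (h : w p < w q) :
    monkCoeff w p q = 1 ∧ monkCoeff w q p = -1 := by
  have hlen := len_mul_swap_of_covBy w hpq h
  refine ⟨?_, ?_⟩
  · rw [monkCoeff, if_pos hlen, if_pos hpq.lt]
  · rw [monkCoeff, swap_comm, if_pos hlen, if_neg hpq.lt.not_gt]

theorem swap_mul_swap_swap_apply {α : Type*} [DecidableEq α] (p q k j : α) :
    swap p q * swap (swap p q k) (swap p q j) = swap k j * swap p q := by
  rw [swap_apply_apply, swap_inv, ← mul_assoc, ← mul_assoc, swap_mul_self, one_mul]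

theorem swap_lt_swap_iff_of_covBy {p q k j : Fin N} (hpq : p ⋖ q) (hkj : ¬(k = p ∧ j = q))
    (hjk : ¬(k = q ∧ j = p)) : swap p q k < swap p q j ↔ k < j := by
  refine ⟨fun h => ?_, fun h => swap_lt_swap_of_covBy hpq h hkj⟩
  simpa using swap_lt_swap_of_covBy hpq h fun ⟨hk, hj⟩ =>
    hjk ⟨(swap_apply_eq_iff.1 hk).trans (swap_apply_left p q),
      (swap_apply_eq_iff.1 hj).trans (swap_apply_right p q)⟩

/-- `p`, `q` being adjacent, conjugation by `t_{p,q}` preserves the order of `k, j` unless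
`{k, j} = {p, q}`; hence `t_{k,j}` goes up from `w` iff its conjugate goes up from `w t_{p,q}`. -/
theorem len_lt_len_mul_swap_mul_swap_iff (w : Perm (Fin N)) {p q k j : Fin N} (hpq : p ⋖ q)
    (hne : k ≠ j) (hkj : ¬(k = p ∧ j = q)) (hjk : ¬(k = q ∧ j = p)) :
    len (w * swap p q) < len (w * swap k j * swap p q) ↔ len w < len (w * swap k j) := by
  rw [mul_assoc w, ← swap_mul_swap_swap_apply, ← mul_assoc,
    len_lt_len_mul_swap_iff _ (by simpa using hne), len_lt_len_mul_swap_iff _ hne,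
    swap_lt_swap_iff_of_covBy hpq hkj hjk]
  simp only [Perm.mul_apply, swap_apply_self]

theorem monkCoeff_w0 (k j : Fin N) : monkCoeff (w0 N) k j = 0 := by
  rcases eq_or_ne k j with rfl | hkj
  · exact monkCoeff_self _ k
  refine if_neg fun hlen => ?_
  have hup := (len_lt_len_mul_swap_iff (w0 N) hkj).1 (by omega)
  have hrev : w0 N k < w0 N j ↔ j < k := Fin.rev_lt_rev
  rw [hrev] at hup
  rcases lt_or_gt_of_ne hkj with hlt | hgt
  · exact hlt.not_gt (hup.1 hlt)
  · exact hgt.not_gt (hup.2 hgt)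

variable [NeZero N]

theorem dividedDiff_monkCoeff_smul_of_ne {w : Perm (Fin N)} {p q k j : Fin N}
    (hpq : p ⋖ q) (h : w q < w p) (hkj : ¬(k = p ∧ j = q)) (hjk : ¬(k = q ∧ j = p)) :
    dividedDiff p q (monkCoeff w k j • schubertPoly N (w * swap k j)) =
      monkCoeff (w * swap p q) (swap p q k) (swap p q j) •
        schubertPoly N (w * swap p q * swap (swap p q k) (swap p q j)) := by
  rcases eq_or_ne k j with rfl | hne
  · rw [monkCoeff_self, monkCoeff_self, zero_smul, zero_smul, map_zero]
  have hup := len_lt_len_mul_swap_mul_swap_iff w hpq hne hkj hjk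
  have hlen := len_mul_swap_of_covBy_of_gt w hpq h
  simp only [map_smul, monkCoeff, swap_lt_swap_iff_of_covBy hpq hkj hjk, mul_assoc w (swap p q),
    swap_mul_swap_swap_apply, ← mul_assoc w (swap k j)]
  rcases lt_or_gt_of_ne ((w * swap k j).injective.ne hpq.lt.ne) with hlt | hgt
  · have hlen' := len_mul_swap_of_covBy (w * swap k j) hpq hlt
    rw [dividedDiff_schubertPoly_of_lt _ hpq hlt, smul_zero,
      if_neg (c := len (w * swap k j * swap p q) = _) (by omega), zero_smul]
  · have hlen' := len_mul_swap_of_covBy_of_gt (w * swap k j) hpq hgt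
    have hiff : len (w * swap k j * swap p q) = len (w * swap p q) + 1 ↔
        len (w * swap k j) = len w + 1 := by omega
    simp only [dividedDiff_schubertPoly_of_gt _ hpq hgt, hiff]

/-- The difference of the two sides of Monk's rule for `x_k 𝔖_w`. -/
noncomputable def monkDefect (w : Perm (Fin N)) (k : Fin N) : MvPolynomial (Fin N) ℤ :=
  X k * schubertPoly N w - ∑ j, monkCoeff w k j • schubertPoly N (w * swap k j)

theorem dividedDiff_monkCoeff_smul {w : Perm (Fin N)} {p q : Fin N} (hpq : p ⋖ q)
    (h : w q < w p) (k j : Fin N) :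
    dividedDiff p q (monkCoeff w k j • schubertPoly N (w * swap k j)) =
      monkCoeff (w * swap p q) (swap p q k) (swap p q j) •
          schubertPoly N (w * swap p q * swap (swap p q k) (swap p q j)) +
        (if k = p ∧ j = q then schubertPoly N w else if k = q ∧ j = p then -schubertPoly N w
          else 0) := by
  have hne := hpq.lt.ne
  obtain ⟨hpos, hneg⟩ := monkCoeff_of_covBy (w := w * swap p q) hpq (by simpa using h)
  obtain ⟨hpq_zero, hqp_zero⟩ := monkCoeff_of_lt_of_covBy hpq h
  by_cases hkj : k = p ∧ j = q
  · obtain ⟨rfl, rfl⟩ := hkj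
    simp [hpq_zero, hneg, mul_assoc, swap_comm j k]
  by_cases hjk : k = q ∧ j = p
  · obtain ⟨rfl, rfl⟩ := hjk
    simp [hqp_zero, hpos, mul_assoc, hne, hne.symm]
  rw [dividedDiff_monkCoeff_smul_of_ne hpq h hkj hjk, if_neg hkj, if_neg hjk, add_zero]

theorem dividedDiff_monkDefect {w : Perm (Fin N)} {p q : Fin N} (hpq : p ⋖ q) (h : w q < w p)
    (k : Fin N) :
    dividedDiff p q (monkDefect w k) = monkDefect (w * swap p q) (swap p q k) := by
  have hboundary : ∑ j : Fin N, (if k = p ∧ j = q then schubertPoly N w else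
      if k = q ∧ j = p then -schubertPoly N w else 0) =
      (if k = p then 1 else if k = q then -1 else 0) * schubertPoly N w := by
    rcases eq_or_ne k p with rfl | hkp
    · simp [hpq.lt.ne]
    · rcases eq_or_ne k q with rfl | hkq
      · simp [hkp]
      · simp [hkp, hkq]
  rw [monkDefect, monkDefect, map_sub, map_sum, dividedDiff_mul, dividedDiff_X hpq.lt.ne, rename_X,
    dividedDiff_schubertPoly_of_gt w hpq h, ← Equiv.sum_comp (swap p q) fun j =>
      monkCoeff (w * swap p q) (swap p q k) j •
        schubertPoly N (w * swap p q * swap (swap p q k) j)]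
  simp only [dividedDiff_monkCoeff_smul hpq h]
  rw [Finset.sum_add_distrib, hboundary]
  ring

theorem monkDefect_mem_symIdeal (w : Perm (Fin N)) (k : Fin N) :
    monkDefect w k ∈ symIdeal N := by
  by_cases hw : ∀ p q, p ⋖ q → w q < w p
  · rw [eq_w0_of_forall_covBy hw]
    simpa only [monkDefect, monkCoeff_w0, zero_smul, Finset.sum_const_zero, sub_zero,
      schubertPoly_w0] using X_mul_staircase_mem k
  push Not at hw
  obtain ⟨p, q, hpq, hle⟩ := hw
  have hlt : w p < w q := hle.lt_of_ne (w.injective.ne hpq.lt.ne)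
  have hdd := dividedDiff_monkDefect (w := w * swap p q) hpq (by simpa using hlt) (swap p q k)
  rw [mul_assoc, swap_mul_self, mul_one, swap_apply_self] at hdd
  rw [← hdd]
  exact dividedDiff_mem_symIdeal p q (monkDefect_mem_symIdeal (w * swap p q) (swap p q k))
termination_by N * N - len w
decreasing_by
  have := len_mul_swap_of_covBy w hpq hlt
  have := len_le_sq (w * swap p q)
  omega

theorem X_mul_SS (w : Perm (Fin N)) (k : Fin N) :
    Ideal.Quotient.mk (symIdeal N) (X k) * SS N w =
      (∑ c with k < c, if len (w * swap k c) = len w + 1 then SS N (w * swap k c) else 0) -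
        ∑ c with c < k, if len (w * swap c k) = len w + 1 then SS N (w * swap c k) else 0 := by
  have hmem := monkDefect_mem_symIdeal w k
  rw [← Ideal.Quotient.eq_zero_iff_mem, monkDefect, map_sub, sub_eq_zero, map_mul, map_sum] at hmem
  rw [SS, hmem, Finset.sum_filter, Finset.sum_filter, ← Finset.sum_sub_distrib]
  refine Finset.sum_congr rfl fun c _ => ?_
  rw [map_zsmul]
  rcases lt_trichotomy k c with hlt | rfl | hgt
  · rw [monkCoeff, if_pos hlt, if_pos hlt, if_neg hlt.not_gt, sub_zero, ite_smul, one_smul,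
      zero_smul, SS]
  · rw [monkCoeff_self, zero_smul, if_neg (lt_irrefl k), sub_zero]
  · rw [monkCoeff, if_neg hgt.not_gt, if_neg hgt.not_gt, if_pos hgt, zero_sub, swap_comm, ite_smul,
      neg_smul, one_smul, zero_smul, SS, neg_ite, neg_zero]

end Monk

/-! ### Inverses and commutators -/

section Ring

variable {E : Type*} [Ring E]

theorem lie_eq_of_inverse {R D : E} (hl : R * (1 - D) = 1) (hr : (1 - D) * R = 1) (n : E) :
    ⁅R, n⁆ = R * ⁅D, n⁆ * R := by
  simp only [Ring.lie_def]
  calc R * n - n * R = R * n * ((1 - D) * R) - R * (1 - D) * n * R := by rw [hl, hr]; simp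
    _ = R * (D * n - n * D) * R := by noncomm_ring

theorem mul_inverse_eq_of_mul_eq_add {R S D D' T Q : E} (hR : (1 - D) * R = 1)
    (hS : S * (1 - D') = 1) (h : D' * T = T * D + Q) : T * R = S * T - S * Q * R := by
  calc T * R = S * (1 - D') * T * R := by rw [hS, one_mul]
    _ = S * (T - D' * T) * R := by noncomm_ring
    _ = S * T * ((1 - D) * R) - S * Q * R := by rw [h]; noncomm_ring
    _ = S * T - S * Q * R := by rw [hR, mul_one]

theorem inverse_add_mul_of_sq_eq_zero {R R' D T y : E} (hR : (1 - D) * R = 1)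
    (hR' : R' * (1 - (D + T * y)) = 1) (hRy : Commute R y) (hTy : Commute T y)
    (hy : y * y = 0) : R' = R + R * T * R * y := by
  have hstep : R' = R + R' * (T * R) * y := by
    calc R' = R' * ((1 - D) * R) := by rw [hR, mul_one]
      _ = R' * (1 - (D + T * y)) * R + R' * T * (y * R) := by noncomm_ring
      _ = R + R' * (T * R) * y := by rw [hR', one_mul, ← hRy.eq]; noncomm_ring
  have hTRy : Commute (T * R) y := hTy.mul_left hRy
  have hzero : y * (T * R) * y = 0 := by rw [← hTRy.eq, mul_assoc, hy, mul_zero]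
  calc R' = R + (R + R' * (T * R) * y) * (T * R) * y := by rw [← hstep, ← hstep]
    _ = R + R * T * R * y + R' * (T * R) * (y * (T * R) * y) := by noncomm_ring
    _ = R + R * T * R * y := by rw [hzero, mul_zero, add_zero]

end Ring

/-! ### Bruhat steps with marked leaves -/

section Operators

/-- A permutation together with the set of marked positions, namely the `b`'s already used. -/
abbrev State (N : ℕ) := Perm (Fin N) × Finset (Fin N)

variable (K : Type*) [CommRing K] {N : ℕ}

/-- The operator `T_{a,b}`: evaluate after the step `w ↦ w t_{a,b}` if it raises the length by one,
and give `0` otherwise. -/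
def bruhatStep (a b : Fin N) : Module.End K (State N → K) where
  toFun F s := if len (s.1 * swap a b) = len s.1 + 1 then F (s.1 * swap a b, s.2) else 0
  map_add' F G := by
    ext s
    simp only [Pi.add_apply]
    split_ifs <;> simp
  map_smul' r F := by
    ext s
    simp

/-- The operator `y_b`: evaluate after marking `b`, and give `0` if `b` is already marked. -/
def mark (b : Fin N) : Module.End K (State N → K) where
  toFun F s := if b ∈ s.2 then 0 else F (s.1, insert b s.2)
  map_add' F G := by
    ext s
    simp only [Pi.add_apply]
    split_ifs <;> simp
  map_smul' r F := by
    ext s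
    simp

/-- The projection `n_b` onto the functions supported on the states in which `b` is marked. -/
def marked (b : Fin N) : Module.End K (State N → K) where
  toFun F s := if b ∈ s.2 then F s else 0
  map_add' F G := by
    ext s
    simp only [Pi.add_apply]
    split_ifs <;> simp
  map_smul' r F := by
    ext s
    simp

variable {K}

theorem bruhatStep_apply (a b : Fin N) (F : State N → K) (s : State N) :
    bruhatStep K a b F s =
      if len (s.1 * swap a b) = len s.1 + 1 then F (s.1 * swap a b, s.2) else 0 :=
  rfl

theorem mark_apply (b : Fin N) (F : State N → K) (s : State N) :
    mark K b F s = if b ∈ s.2 then 0 else F (s.1, insert b s.2) :=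
  rfl

theorem marked_apply (b : Fin N) (F : State N → K) (s : State N) :
    marked K b F s = if b ∈ s.2 then F s else 0 :=
  rfl

theorem commute_mark_bruhatStep (c a b : Fin N) : Commute (mark K c) (bruhatStep K a b) := by
  refine LinearMap.ext fun F => funext fun s => ?_
  simp only [Module.End.mul_apply, bruhatStep_apply, mark_apply]
  split_ifs <;> rfl

theorem commute_marked_bruhatStep (c a b : Fin N) : Commute (marked K c) (bruhatStep K a b) := by
  refine LinearMap.ext fun F => funext fun s => ?_
  simp only [Module.End.mul_apply, bruhatStep_apply, marked_apply]
  split_ifs <;> rfl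

theorem commute_marked_marked (c d : Fin N) : Commute (marked K c) (marked K d) := by
  refine LinearMap.ext fun F => funext fun s => ?_
  simp only [Module.End.mul_apply, marked_apply]
  split_ifs <;> rfl

theorem commute_mark_mark (c d : Fin N) : Commute (mark K c) (mark K d) := by
  refine LinearMap.ext fun F => funext fun s => ?_
  simp only [Module.End.mul_apply, mark_apply, Finset.mem_insert]
  rcases eq_or_ne c d with rfl | hcd
  · rfl
  · by_cases hc : c ∈ s.2 <;> by_cases hd : d ∈ s.2 <;>
      simp [hcd, hcd.symm, hc, hd, Finset.insert_comm]

theorem mark_mul_mark_self (c : Fin N) : mark K c * mark K c = 0 := by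
  refine LinearMap.ext fun F => funext fun s => ?_
  simp [mark_apply]

theorem lie_mark_marked_self (c : Fin N) : ⁅mark K c, marked K c⁆ = mark K c := by
  refine LinearMap.ext fun F => funext fun s => ?_
  simp only [Ring.lie_def, LinearMap.sub_apply, Pi.sub_apply, Module.End.mul_apply, mark_apply,
    marked_apply, Finset.mem_insert]
  by_cases hc : c ∈ s.2 <;> simp [hc]

theorem commute_mark_marked {c d : Fin N} (h : c ≠ d) : Commute (mark K c) (marked K d) := by
  refine LinearMap.ext fun F => funext fun s => ?_
  simp only [Module.End.mul_apply, mark_apply, marked_apply, Finset.mem_insert]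
  by_cases hc : c ∈ s.2 <;> by_cases hd : d ∈ s.2 <;> simp [h.symm, hc, hd]

theorem commute_bruhatStep {a b c d : Fin N} (hab : a < b) (hcd : c < d) (hac : a ≠ c)
    (had : a ≠ d) (hbc : b ≠ c) (hbd : b ≠ d) :
    Commute (bruhatStep K a b) (bruhatStep K c d) := by
  refine LinearMap.ext fun F => funext fun s => ?_
  obtain ⟨w, B⟩ := s
  have hcomm : w * swap a b * swap c d = w * swap c d * swap a b := by
    rw [mul_assoc, mul_assoc, (Perm.disjoint_swap_swap (by simp [*, hab.ne, hcd.ne])).commute.eq]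
  have hab₀ := len_lt_len_mul_swap_iff_of_lt w hab
  have hcd₀ := len_lt_len_mul_swap_iff_of_lt w hcd
  have hcd₁ : len (w * swap a b) < len (w * swap a b * swap c d) ↔ w c < w d := by
    simpa only [Perm.mul_apply, swap_apply_of_ne_of_ne hac.symm hbc.symm,
      swap_apply_of_ne_of_ne had.symm hbd.symm] using
      len_lt_len_mul_swap_iff_of_lt (w * swap a b) hcd
  have hab₁ : len (w * swap c d) < len (w * swap c d * swap a b) ↔ w a < w b := by
    simpa only [Perm.mul_apply, swap_apply_of_ne_of_ne hac had,
      swap_apply_of_ne_of_ne hbc hbd] using len_lt_len_mul_swap_iff_of_lt (w * swap c d) hab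
  rw [hcomm, ← hcd₀] at hcd₁
  rw [← hab₀] at hab₁
  simp only [Module.End.mul_apply, bruhatStep_apply, hcomm]
  split_ifs <;> first | rfl | omega

theorem swap_mul_swap_eq {α : Type*} [DecidableEq α] {a k c : α} (hak : a ≠ k) (hac : a ≠ c)
    (hkc : k ≠ c) :
    swap a c * swap k c = swap k c * swap a k ∧ swap a k * swap a c = swap k c * swap a k := by
  have hconj := swap_mul_swap_swap_apply k c a c
  have hconj' := swap_mul_swap_swap_apply a k k c
  rw [swap_apply_of_ne_of_ne hak hac, swap_apply_right] at hconj
  rw [swap_apply_right, swap_apply_of_ne_of_ne hac.symm hkc.symm] at hconj'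
  exact ⟨hconj.symm, hconj'⟩

theorem len_two_step_iff (w : Perm (Fin N)) {a k c : Fin N} (hak : a < k) (hkc : k < c) :
    let step (u : Perm (Fin N)) : Prop :=
      len u = len w + 1 ∧ len (w * swap k c * swap a k) = len u + 1
    (step (w * swap k c) ↔ step (w * swap a c) ∨ step (w * swap a k)) ∧
      ¬(step (w * swap a c) ∧ step (w * swap a k)) := by
  have hac := hak.trans hkc
  obtain ⟨hconj, hconj'⟩ := swap_mul_swap_eq hak.ne hac.ne hkc.ne
  have h₁ := len_lt_len_mul_swap_iff_of_lt w hak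
  have h₂ := len_lt_len_mul_swap_iff_of_lt w hkc
  have h₃ := len_lt_len_mul_swap_iff_of_lt w hac
  have h₄ := len_lt_len_mul_swap_iff_of_lt (w * swap k c) hak
  have h₅ := len_lt_len_mul_swap_iff_of_lt (w * swap a c) hkc
  have h₆ := len_lt_len_mul_swap_iff_of_lt (w * swap a k) hac
  have hne := Fin.val_ne_of_ne (w.injective.ne hak.ne)
  simp only [Perm.mul_apply, swap_apply_left, swap_apply_right,
    swap_apply_of_ne_of_ne hak.ne hac.ne, swap_apply_of_ne_of_ne hak.ne' hkc.ne,
    swap_apply_of_ne_of_ne hac.ne' hkc.ne'] at h₄ h₅ h₆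
  rw [mul_assoc w, hconj, ← mul_assoc w] at h₅
  rw [mul_assoc w, hconj', ← mul_assoc w] at h₆
  simp only [Fin.lt_def] at h₁ h₂ h₃ h₄ h₅ h₆
  omega

theorem ite_eq_ite_add_ite {M : Type*} [AddMonoid M] {p q r : Prop} [Decidable p] [Decidable q]
    [Decidable r] (h : p ↔ q ∨ r) (hqr : ¬(q ∧ r)) (x : M) :
    (if p then x else 0) = (if q then x else 0) + if r then x else 0 := by
  by_cases hq : q <;> by_cases hr : r <;> simp_all

theorem bruhatStep_mul_bruhatStep {a k c : Fin N} (hak : a < k) (hkc : k < c) :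
    bruhatStep K k c * bruhatStep K a k =
      bruhatStep K a c * bruhatStep K k c + bruhatStep K a k * bruhatStep K a c := by
  refine LinearMap.ext fun F => funext fun ⟨w, B⟩ => ?_
  obtain ⟨hconj, hconj'⟩ := swap_mul_swap_eq hak.ne (hak.trans hkc).ne hkc.ne
  obtain ⟨hiff, hnot⟩ := len_two_step_iff w hak hkc
  have hac : w * swap a c * swap k c = w * swap k c * swap a k := by simp only [mul_assoc, hconj]
  have hak' : w * swap a k * swap a c = w * swap k c * swap a k := by simp only [mul_assoc, hconj']
  simp only [Module.End.mul_apply, bruhatStep_apply, LinearMap.add_apply, Pi.add_apply, hac, hak',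
    ← ite_and]
  exact ite_eq_ite_add_ite hiff hnot _

end Operators

/-! ### Star operators -/

section Star

variable (K : Type*) [CommRing K] {N : ℕ}

/-- The operator `D_a = ∑_{c ∈ L} y_c T_{a,c}`, one marked step with center `a` and leaf in `L`. -/
def markedStep (L : Finset (Fin N)) (a : Fin N) : Module.End K (State N → K) :=
  ∑ c ∈ L, mark K c * bruhatStep K a c

/-- The operator `R_a = (1 - D_a)⁻¹`, which sums over all sequences of marked steps with
center `a`. The geometric series stops because each step marks a new position. -/
def starOp (L : Finset (Fin N)) (a : Fin N) : Module.End K (State N → K) :=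
  ∑ i ∈ Finset.range (N + 1), markedStep K L a ^ i

/-- The product of the operators `R_a` for `a` in the list `A`. -/
def starProd (L : Finset (Fin N)) (A : List (Fin N)) : Module.End K (State N → K) :=
  (A.map (starOp K L)).prod

variable {K}

theorem markedStep_apply (L : Finset (Fin N)) (a : Fin N) (F : State N → K) (s : State N) :
    markedStep K L a F s = ∑ c ∈ L, if c ∈ s.2 then 0 else
      if len (s.1 * swap a c) = len s.1 + 1 then F (s.1 * swap a c, insert c s.2) else 0 := by
  simp only [markedStep, LinearMap.sum_apply, Finset.sum_apply, Module.End.mul_apply, mark_apply,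
    bruhatStep_apply]

theorem markedStep_pow_apply_eq_zero (L : Finset (Fin N)) (a : Fin N) {j : ℕ} (F : State N → K)
    (s : State N) (hs : N < j + s.2.card) : (markedStep K L a ^ j) F s = 0 := by
  induction j generalizing s with
  | zero =>
    have hcard := Finset.card_le_univ s.2
    rw [Fintype.card_fin] at hcard
    omega
  | succ j ih =>
    rw [pow_succ', Module.End.mul_apply, markedStep_apply]
    refine Finset.sum_eq_zero fun c _ => ?_
    split_ifs with hc
    · rfl
    · refine ih _ ?_
      rw [Finset.card_insert_of_notMem hc]
      omega
    · rfl

theorem markedStep_pow_eq_zero (L : Finset (Fin N)) (a : Fin N) :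
    markedStep K L a ^ (N + 1) = 0 :=
  LinearMap.ext fun F => funext fun s => markedStep_pow_apply_eq_zero L a F s (by omega)

theorem starOp_mul (L : Finset (Fin N)) (a : Fin N) :
    starOp K L a * (1 - markedStep K L a) = 1 := by
  rw [starOp, geom_sum_mul_neg, markedStep_pow_eq_zero, sub_zero]

theorem mul_starOp (L : Finset (Fin N)) (a : Fin N) :
    (1 - markedStep K L a) * starOp K L a = 1 := by
  rw [starOp, mul_neg_geom_sum, markedStep_pow_eq_zero, sub_zero]

theorem commute_starOp {L : Finset (Fin N)} {a : Fin N} {Z : Module.End K (State N → K)}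
    (h : ∀ c ∈ L, Commute (mark K c * bruhatStep K a c) Z) : Commute (starOp K L a) Z :=
  Commute.sum_left _ _ _ fun i _ => (Commute.sum_left _ _ _ h).pow_left i

theorem commute_starOp_mark (L : Finset (Fin N)) (a b : Fin N) :
    Commute (starOp K L a) (mark K b) :=
  commute_starOp fun c _ => (commute_mark_mark c b).mul_left (commute_mark_bruhatStep b a c).symm

theorem commute_starOp_marked {L : Finset (Fin N)} (a : Fin N) {b : Fin N} (hb : b ∉ L) :
    Commute (starOp K L a) (marked K b) :=
  commute_starOp fun c hc => (commute_mark_marked (ne_of_mem_of_not_mem hc hb)).mul_left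
    (commute_marked_bruhatStep b a c).symm

theorem commute_starOp_bruhatStep {L : Finset (Fin N)} {a b d : Fin N} (hL : ∀ c ∈ L, d < c)
    (had : a < d) (hbd : b < d) (hab : a ≠ b) : Commute (starOp K L a) (bruhatStep K b d) :=
  commute_starOp fun c hc => (commute_mark_bruhatStep c b d).mul_left <|
    commute_bruhatStep (had.trans (hL c hc)) hbd hab had.ne (hbd.trans (hL c hc)).ne' (hL c hc).ne'

theorem commute_mark_mul_bruhatStep {a b c d : Fin N} (hac : a < c) (hbd : b < d) (hab : a ≠ b)
    (had : a ≠ d) (hcb : c ≠ b) :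
    Commute (mark K c * bruhatStep K a c) (mark K d * bruhatStep K b d) := by
  rcases eq_or_ne c d with rfl | hcd
  · have hzero (x y : Fin N) : mark K c * bruhatStep K x c * (mark K c * bruhatStep K y c) = 0 := by
      rw [(commute_mark_bruhatStep c x c).eq, mul_assoc, ← mul_assoc (mark K c),
        mark_mul_mark_self, zero_mul, mul_zero]
    exact (hzero a b).trans (hzero b a).symm
  · exact ((commute_mark_mark c d).mul_right (commute_mark_bruhatStep c b d)).mul_left
      ((commute_mark_bruhatStep d a c).symm.mul_right
        (commute_bruhatStep hac hbd hab had hcb hcd))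

theorem commute_starOp_mark_mul_bruhatStep {L : Finset (Fin N)} {a b d : Fin N}
    (ha : ∀ c ∈ L, a < c) (hb : ∀ c ∈ L, b < c) (hab : a ≠ b) (hd : d ∈ L) :
    Commute (starOp K L a) (mark K d * bruhatStep K b d) :=
  commute_starOp fun c hc =>
    commute_mark_mul_bruhatStep (ha c hc) (hb d hd) hab (ha d hd).ne (hb c hc).ne'

theorem commute_starOp_starOp {L : Finset (Fin N)} {a b : Fin N} (ha : ∀ c ∈ L, a < c)
    (hb : ∀ c ∈ L, b < c) : Commute (starOp K L a) (starOp K L b) := by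
  rcases eq_or_ne a b with rfl | hab
  · exact Commute.refl _
  · exact (commute_starOp fun d hd =>
      (commute_starOp_mark_mul_bruhatStep ha hb hab hd).symm).symm

theorem lie_markedStep_marked {L : Finset (Fin N)} (a : Fin N) {c : Fin N} (hc : c ∈ L) :
    ⁅markedStep K L a, marked K c⁆ = mark K c * bruhatStep K a c := by
  have hterm (d : Fin N) : mark K d * bruhatStep K a d * marked K c -
      marked K c * (mark K d * bruhatStep K a d) = ⁅mark K d, marked K c⁆ * bruhatStep K a d := by
    rw [mul_assoc, ← (commute_marked_bruhatStep c a d).eq, Ring.lie_def, sub_mul]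
    simp only [mul_assoc]
  rw [Ring.lie_def, markedStep, Finset.sum_mul, Finset.mul_sum, ← Finset.sum_sub_distrib,
    Finset.sum_congr rfl fun d _ => hterm d, Finset.sum_eq_single_of_mem c hc,
    lie_mark_marked_self]
  intro d _ hdc
  rw [(commute_mark_marked hdc).lie_eq, zero_mul]

theorem lie_starOp_marked {L : Finset (Fin N)} (a : Fin N) {c : Fin N} (hc : c ∈ L) :
    ⁅starOp K L a, marked K c⁆ = starOp K L a * (mark K c * bruhatStep K a c) * starOp K L a := by
  rw [lie_eq_of_inverse (starOp_mul L a) (mul_starOp L a), lie_markedStep_marked a hc]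

theorem lie_starOp_marked_mul {L : Finset (Fin N)} (a : Fin N) {c : Fin N} (hc : c ∈ L)
    {Z : Module.End K (State N → K)} (hZ : Commute Z (mark K c)) :
    ⁅starOp K L a, marked K c⁆ * Z =
      starOp K L a * bruhatStep K a c * starOp K L a * Z * mark K c := by
  rw [lie_starOp_marked a hc, (commute_mark_bruhatStep c a c).eq, mul_assoc _ Z, hZ.eq]
  simp only [mul_assoc]
  rw [← mul_assoc _ _ Z, ← (commute_starOp_mark L a c).eq, mul_assoc]

theorem starOp_insert {L : Finset (Fin N)} (a : Fin N) {k : Fin N} (hk : k ∉ L) :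
    starOp K (insert k L) a =
      starOp K L a + starOp K L a * bruhatStep K a k * starOp K L a * mark K k := by
  have hstep : markedStep K (insert k L) a = markedStep K L a + bruhatStep K a k * mark K k := by
    rw [markedStep, Finset.sum_insert hk, (commute_mark_bruhatStep k a k).eq, add_comm, markedStep]
  exact inverse_add_mul_of_sq_eq_zero (mul_starOp L a) (hstep ▸ starOp_mul (insert k L) a)
    (commute_starOp_mark L a k) (commute_mark_bruhatStep k a k).symm (mark_mul_mark_self k)

theorem markedStep_mul_bruhatStep {L : Finset (Fin N)} {a k : Fin N} (hak : a < k)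
    (hL : ∀ c ∈ L, k < c) :
    markedStep K L k * bruhatStep K a k = bruhatStep K a k * markedStep K L a +
      ∑ c ∈ L, mark K c * bruhatStep K a c * bruhatStep K k c := by
  rw [markedStep, markedStep, Finset.sum_mul, Finset.mul_sum, ← Finset.sum_add_distrib]
  refine Finset.sum_congr rfl fun c hc => ?_
  rw [mul_assoc, bruhatStep_mul_bruhatStep hak (hL c hc), ← mul_assoc (bruhatStep K a k),
    ← (commute_mark_bruhatStep c a k).eq]
  noncomm_ring

theorem starOp_mul_bruhatStep_mul_starOp {L : Finset (Fin N)} {a k : Fin N} (hak : a < k)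
    (hL : ∀ c ∈ L, k < c) :
    starOp K L a * bruhatStep K a k * starOp K L a =
      starOp K L a * starOp K L k * bruhatStep K a k -
        ∑ c ∈ L, ⁅starOp K L a, marked K c⁆ * starOp K L k * bruhatStep K k c := by
  have haL (c) (hc : c ∈ L) : a < c := hak.trans (hL c hc)
  have hterm : ∀ c ∈ L, ⁅starOp K L a, marked K c⁆ * starOp K L k * bruhatStep K k c =
      starOp K L a * starOp K L k * (mark K c * bruhatStep K a c * bruhatStep K k c) *
        starOp K L a := by
    intro c hc
    calc ⁅starOp K L a, marked K c⁆ * starOp K L k * bruhatStep K k c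
        = starOp K L a * bruhatStep K a c * (starOp K L a * starOp K L k * mark K c) *
            bruhatStep K k c := by
          rw [lie_starOp_marked_mul a hc (commute_starOp_mark L k c)]
          simp only [mul_assoc]
      _ = starOp K L a * (mark K c * bruhatStep K a c * starOp K L k) * starOp K L a *
            bruhatStep K k c := by
          rw [(commute_starOp_starOp haL hL).eq, mul_assoc _ _ (mark K c),
            (commute_starOp_mark L a c).eq, ← mul_assoc (starOp K L k),
            (commute_starOp_mark L k c).eq, (commute_mark_bruhatStep c a c).eq]
          simp only [mul_assoc]
      _ = starOp K L a * starOp K L k * bruhatStep K a c *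
            (starOp K L a * (mark K c * bruhatStep K k c)) := by
          rw [← (commute_starOp_mark_mul_bruhatStep hL haL hak.ne' hc).eq,
            (commute_mark_bruhatStep c a c).eq, ← mul_assoc (starOp K L a) (mark K c),
            (commute_starOp_mark L a c).eq]
          simp only [mul_assoc]
      _ = _ := by
          rw [(commute_starOp_mark_mul_bruhatStep haL hL hak.ne hc).eq,
            (commute_mark_bruhatStep c a c).eq]
          simp only [mul_assoc]
  have hmul := mul_inverse_eq_of_mul_eq_add (mul_starOp L a) (starOp_mul L k)
    (markedStep_mul_bruhatStep (K := K) hak hL)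
  rw [mul_assoc, hmul, Finset.sum_congr rfl hterm, ← Finset.sum_mul, ← Finset.mul_sum]
  simp only [mul_sub, mul_assoc]

theorem markedStep_pow_bruhatStep_apply {L : Finset (Fin N)} {k c : Fin N} (hL : ∀ d ∈ L, k < d)
    (hc : c ∈ L) (i : ℕ) (F : State N → K) (s : State N) (hs : s.1 c < s.1 k) :
    (markedStep K L k ^ i) (bruhatStep K k c F) s = 0 := by
  induction i generalizing s with
  | zero =>
    have hlt := len_lt_len_mul_swap_iff_of_lt s.1 (hL c hc)
    rw [pow_zero, Module.End.one_apply, bruhatStep_apply, if_neg]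
    intro hlen
    exact hs.not_gt (hlt.1 (by omega))
  | succ i ih =>
    rw [pow_succ', Module.End.mul_apply, markedStep_apply]
    refine Finset.sum_eq_zero fun d hd => ?_
    split_ifs with hmem hlen
    · rfl
    · have hkd : s.1 k < s.1 d := (len_lt_len_mul_swap_iff_of_lt s.1 (hL d hd)).1 (by omega)
      have hcd : c ≠ d := by
        rintro rfl
        exact hs.not_gt hkd
      refine ih _ ?_
      simpa only [Perm.mul_apply, swap_apply_left, swap_apply_of_ne_of_ne (hL c hc).ne' hcd]
        using hs.trans hkd
    · rfl

/-- After the step `t_{k,c}` the value at `k` exceeds the one at `c`, and further steps with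
center `k` only increase it, so that `t_{k,c}` cannot be taken again. -/
theorem bruhatStep_mul_starOp_mul_bruhatStep {L : Finset (Fin N)} {k c : Fin N}
    (hL : ∀ d ∈ L, k < d) (hc : c ∈ L) :
    bruhatStep K k c * starOp K L k * bruhatStep K k c = 0 := by
  refine LinearMap.ext fun F => funext fun s => ?_
  rw [Module.End.mul_apply, Module.End.mul_apply, bruhatStep_apply]
  split_ifs with hlen
  · simp only [starOp, LinearMap.sum_apply, Finset.sum_apply]
    refine Finset.sum_eq_zero fun i _ => markedStep_pow_bruhatStep_apply hL hc i F _ ?_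
    have hlt : s.1 k < s.1 c := (len_lt_len_mul_swap_iff_of_lt s.1 (hL c hc)).1 (by omega)
    simpa only [Perm.mul_apply, swap_apply_left, swap_apply_right] using hlt
  · rfl

theorem lie_starOp_marked_mul_bruhatStep {L : Finset (Fin N)} {k c : Fin N} (hL : ∀ d ∈ L, k < d)
    (hc : c ∈ L) : ⁅starOp K L k, marked K c⁆ * bruhatStep K k c = 0 := by
  rw [lie_starOp_marked k hc, mul_assoc, mul_assoc, mul_assoc (mark K c),
    ← mul_assoc _ (starOp K L k), bruhatStep_mul_starOp_mul_bruhatStep hL hc, mul_zero, mul_zero]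

end Star

/-! ### Inserting a leaf into a product of star operators -/

section StarProd

variable {K : Type*} [CommRing K] {N : ℕ}

theorem starProd_cons (L : Finset (Fin N)) (a : Fin N) (A : List (Fin N)) :
    starProd K L (a :: A) = starOp K L a * starProd K L A := by
  rw [starProd, List.map_cons, List.prod_cons, starProd]

theorem commute_starProd {L : Finset (Fin N)} {A : List (Fin N)} {Z : Module.End K (State N → K)}
    (h : ∀ a ∈ A, Commute (starOp K L a) Z) : Commute (starProd K L A) Z :=
  Commute.list_prod_left _ _ (List.forall_mem_map.2 h)

theorem commute_starProd_mark (L : Finset (Fin N)) (A : List (Fin N)) (b : Fin N) :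
    Commute (starProd K L A) (mark K b) :=
  commute_starProd fun a _ => commute_starOp_mark L a b

theorem commute_starProd_marked {L : Finset (Fin N)} (A : List (Fin N)) {b : Fin N} (hb : b ∉ L) :
    Commute (starProd K L A) (marked K b) :=
  commute_starProd fun a _ => commute_starOp_marked a hb

theorem commute_starProd_starOp {L : Finset (Fin N)} {A : List (Fin N)} {k : Fin N}
    (hL : ∀ c ∈ L, k < c) (hA : ∀ a ∈ A, a < k) : Commute (starProd K L A) (starOp K L k) :=
  commute_starProd fun a ha => commute_starOp_starOp (fun c hc => (hA a ha).trans (hL c hc)) hL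

variable (K) in
/-- The coefficient of `y_k` in the product of the star operators with centers `A` and leaves
`insert k L`. -/
def leafCoeff (L : Finset (Fin N)) (k : Fin N) (A : List (Fin N)) : Module.End K (State N → K) :=
  starProd K L A * starOp K L k * (A.map fun a => bruhatStep K a k).sum -
    ∑ c ∈ L, ⁅starProd K L A, marked K c⁆ * (starOp K L k * bruhatStep K k c)

theorem commute_leafCoeff {L : Finset (Fin N)} {k : Fin N} {A : List (Fin N)}
    {Z : Module.End K (State N → K)} (hstarProd : Commute (starProd K L A) Z)
    (hstar : Commute (starOp K L k) Z) (hbruhat : ∀ a b, Commute (bruhatStep K a b) Z)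
    (hmarked : ∀ c ∈ L, Commute (marked K c) Z) : Commute (leafCoeff K L k A) Z := by
  refine Commute.sub_left ((hstarProd.mul_left hstar).mul_left ?_)
    (Commute.sum_left _ _ _ fun c hc => ?_)
  · exact Commute.list_sum_left _ _ (List.forall_mem_map.2 fun a _ => hbruhat a k)
  · rw [Ring.lie_def]
    have hlie := (hstarProd.mul_left (hmarked c hc)).sub_left ((hmarked c hc).mul_left hstarProd)
    exact hlie.mul_left (hstar.mul_left (hbruhat k c))

theorem commute_leafCoeff_mark {L : Finset (Fin N)} {k : Fin N} (hk : k ∉ L) (A : List (Fin N)) :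
    Commute (leafCoeff K L k A) (mark K k) :=
  commute_leafCoeff (commute_starProd_mark L A k) (commute_starOp_mark L k k)
    (fun a b => (commute_mark_bruhatStep k a b).symm)
    fun _ hc => (commute_mark_marked (ne_of_mem_of_not_mem hc hk).symm).symm

theorem commute_leafCoeff_marked {L : Finset (Fin N)} {k : Fin N} (hk : k ∉ L)
    (A : List (Fin N)) : Commute (leafCoeff K L k A) (marked K k) :=
  commute_leafCoeff (commute_starProd_marked A hk) (commute_starOp_marked k hk)
    (fun a b => (commute_marked_bruhatStep k a b).symm) fun c _ => commute_marked_marked c k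

theorem starOp_mul_bruhatStep_mul_starOp_mul_starProd {L : Finset (Fin N)} {a k : Fin N}
    {A : List (Fin N)} (hL : ∀ c ∈ L, k < c) (hak : a < k) (hA : ∀ b ∈ A, b < k) (haA : a ∉ A) :
    starOp K L a * bruhatStep K a k * starOp K L a * starProd K L A =
      starOp K L a * starProd K L A * starOp K L k * bruhatStep K a k -
        ∑ c ∈ L, ⁅starOp K L a, marked K c⁆ * starProd K L A *
          (starOp K L k * bruhatStep K k c) := by
  have hS := commute_starProd_starOp (K := K) hL hA
  have hT : Commute (starProd K L A) (bruhatStep K a k) := commute_starProd fun b hb =>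
    commute_starOp_bruhatStep hL (hA b hb) hak (ne_of_mem_of_not_mem hb haA)
  have hyT (c) (hc : c ∈ L) : Commute (starProd K L A) (mark K c * bruhatStep K k c) :=
    commute_starProd fun b hb => commute_starOp_mark_mul_bruhatStep
      (fun d hd => (hA b hb).trans (hL d hd)) hL (hA b hb).ne hc
  rw [starOp_mul_bruhatStep_mul_starOp hak hL, sub_mul, Finset.sum_mul]
  refine congr_arg₂ _ ?_ (Finset.sum_congr rfl fun c hc => ?_)
  · rw [mul_assoc, ← hT.eq, ← mul_assoc, mul_assoc _ (starOp K L k), ← hS.eq, ← mul_assoc]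
  · have hSy := commute_starOp_mark (K := K) L k c
    rw [lie_starOp_marked_mul a hc hSy,
      lie_starOp_marked_mul a hc (commute_starProd_mark L A c)]
    simp only [mul_assoc]
    rw [← mul_assoc (mark K c) (bruhatStep K k c) (starProd K L A), ← (hyT c hc).eq,
      ← mul_assoc (starOp K L k) (starProd K L A), ← hS.eq, ← mul_assoc (mark K c) (starOp K L k),
      ← hSy.eq]
    simp only [mul_assoc]

theorem leafCoeff_cons {L : Finset (Fin N)} {a k : Fin N} {A : List (Fin N)}
    (hL : ∀ c ∈ L, k < c) (hak : a < k) (hA : ∀ b ∈ A, b < k) (haA : a ∉ A) :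
    leafCoeff K L k (a :: A) =
      starOp K L a * bruhatStep K a k * starOp K L a * starProd K L A +
        starOp K L a * leafCoeff K L k A := by
  have hlie (n : Module.End K (State N → K)) : ⁅starOp K L a * starProd K L A, n⁆ =
      ⁅starOp K L a, n⁆ * starProd K L A + starOp K L a * ⁅starProd K L A, n⁆ := by
    simp only [Ring.lie_def, sub_mul, mul_sub, mul_assoc]
    abel
  rw [starOp_mul_bruhatStep_mul_starOp_mul_starProd hL hak hA haA, leafCoeff, leafCoeff,
    starProd_cons, List.map_cons, List.sum_cons]
  simp only [hlie, add_mul, Finset.sum_add_distrib, mul_sub, mul_add, Finset.mul_sum, mul_assoc]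
  abel

theorem starProd_insert {L : Finset (Fin N)} {k : Fin N} {A : List (Fin N)}
    (hL : ∀ c ∈ L, k < c) (hA : ∀ a ∈ A, a < k) (hnd : A.Nodup) :
    starProd K (insert k L) A = starProd K L A + leafCoeff K L k A * mark K k := by
  have hk : k ∉ L := fun h => (hL k h).false
  induction A with
  | nil => simp [starProd, leafCoeff, Ring.lie_def]
  | cons a A ih =>
    obtain ⟨hak, hA⟩ := List.forall_mem_cons.1 hA
    obtain ⟨haA, hnd⟩ := List.nodup_cons.1 hnd
    have hzero : mark K k * (leafCoeff K L k A * mark K k) = 0 := by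
      rw [(commute_leafCoeff_mark hk A).eq, ← mul_assoc, mark_mul_mark_self, zero_mul]
    rw [starProd_cons, starOp_insert a hk, ih hA hnd, starProd_cons, leafCoeff_cons hL hak hA haA]
    calc _ = starOp K L a * starProd K L A + starOp K L a * (leafCoeff K L k A * mark K k) +
          starOp K L a * bruhatStep K a k * starOp K L a * (mark K k * starProd K L A) +
          starOp K L a * bruhatStep K a k * starOp K L a *
            (mark K k * (leafCoeff K L k A * mark K k)) := by noncomm_ring
      _ = _ := by
        rw [hzero, ← (commute_starProd_mark L A k).eq]
        noncomm_ring

theorem lie_starProd_marked_mul {L : Finset (Fin N)} {k c : Fin N} (A : List (Fin N))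
    (hL : ∀ d ∈ L, k < d) (hc : c ∈ L) :
    ⁅starProd K L A, marked K c⁆ * (starOp K L k * bruhatStep K k c) =
      ⁅starProd K L A * starOp K L k * bruhatStep K k c, marked K c⁆ := by
  have hlie := lie_starOp_marked_mul_bruhatStep (K := K) hL hc
  rw [Ring.lie_def, sub_mul, sub_eq_zero] at hlie
  simp only [Ring.lie_def, sub_mul, mul_assoc]
  rw [← (commute_marked_bruhatStep c k c).eq, ← mul_assoc (starOp K L k) (marked K c), hlie]
  simp only [mul_assoc]

theorem starProd_eq_sub (L : Finset (Fin N)) (k : Fin N) (A : List (Fin N)) :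
    starProd K L A = starProd K L A * starOp K L k -
      ∑ c ∈ L, starProd K L A * starOp K L k * bruhatStep K k c * mark K c := by
  have hsum : ∑ c ∈ L, starProd K L A * starOp K L k * bruhatStep K k c * mark K c =
      starProd K L A * (starOp K L k * markedStep K L k) := by
    simp only [markedStep, Finset.mul_sum, (commute_mark_bruhatStep _ _ _).eq, mul_assoc]
  rw [hsum, ← mul_sub, ← mul_one_sub, starOp_mul, mul_one]

/-- The function equal to `f` on the states with exactly `m` marked positions, and to `0`
elsewhere. -/
def atMarks (f : Perm (Fin N) → K) (m : ℕ) (s : State N) : K :=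
  if s.2.card = m then f s.1 else 0

theorem mark_atMarks_succ (f : Perm (Fin N) → K) (m : ℕ) (c : Fin N) :
    mark K c (atMarks f (m + 1)) = atMarks f m - marked K c (atMarks f m) := by
  funext s
  rw [mark_apply, Pi.sub_apply, marked_apply]
  split_ifs with hc
  · rw [sub_self]
  · simp only [atMarks, Finset.card_insert_of_notMem hc, Nat.add_right_cancel_iff, sub_zero]

theorem marked_apply_empty (c : Fin N) (F : State N → K) (w : Perm (Fin N)) :
    marked K c F (w, ∅) = 0 := by
  rw [marked_apply, if_neg (Finset.notMem_empty c)]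

theorem leafCoeff_atMarks {L : Finset (Fin N)} {k : Fin N} {A : List (Fin N)}
    (hL : ∀ c ∈ L, k < c) (f : Perm (Fin N) → K) (m : ℕ) (w : Perm (Fin N)) :
    (leafCoeff K L k A * mark K k) (atMarks f (m + 1)) (w, ∅) =
      (starProd K L A * starOp K L k) ((A.map fun a => bruhatStep K a k).sum (atMarks f m)) (w, ∅) -
        ∑ c ∈ L, (starProd K L A * starOp K L k * bruhatStep K k c)
          (marked K c (atMarks f m)) (w, ∅) := by
  have hk : k ∉ L := fun h => (hL k h).false
  rw [Module.End.mul_apply, mark_atMarks_succ, map_sub, Pi.sub_apply,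
    ← Module.End.mul_apply _ (marked K k), (commute_leafCoeff_marked hk A).eq,
    Module.End.mul_apply (marked K k), marked_apply_empty, sub_zero, leafCoeff,
    LinearMap.sub_apply, Pi.sub_apply, LinearMap.sum_apply, Finset.sum_apply,
    Module.End.mul_apply (starProd K L A * starOp K L k)]
  refine congr_arg _ (Finset.sum_congr rfl fun c hc => ?_)
  rw [lie_starProd_marked_mul A hL hc, Ring.lie_def, LinearMap.sub_apply, Pi.sub_apply,
    Module.End.mul_apply (marked K c), marked_apply_empty, sub_zero, Module.End.mul_apply]

theorem starProd_atMarks {L : Finset (Fin N)} (k : Fin N) (A : List (Fin N))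
    (f : Perm (Fin N) → K) (m : ℕ) (w : Perm (Fin N)) :
    starProd K L A (atMarks f (m + 1)) (w, ∅) =
      (starProd K L A * starOp K L k) (atMarks f (m + 1)) (w, ∅) -
        ∑ c ∈ L, ((starProd K L A * starOp K L k) (bruhatStep K k c (atMarks f m)) (w, ∅) -
          (starProd K L A * starOp K L k * bruhatStep K k c)
            (marked K c (atMarks f m)) (w, ∅)) := by
  conv_lhs => rw [starProd_eq_sub L k A]
  rw [LinearMap.sub_apply, Pi.sub_apply, LinearMap.sum_apply, Finset.sum_apply]
  refine congr_arg _ (Finset.sum_congr rfl fun c _ => ?_)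
  rw [Module.End.mul_apply, mark_atMarks_succ, map_sub, Pi.sub_apply,
    Module.End.mul_apply _ (bruhatStep K k c)]

/-- The operator counterpart of `h_{m+1}(x₁,…,x_{k+1}) = h_{m+1}(x₁,…,x_k) + x h_m(x₁,…,x_{k+1})`,
with `hmonk` in the role of Monk's rule for multiplication by `x`. -/
theorem starProd_append_atMarks_succ {L : Finset (Fin N)} {k : Fin N} {A : List (Fin N)}
    (hL : ∀ c ∈ L, k < c) (hA : ∀ a ∈ A, a < k) (hnd : A.Nodup) {f : Perm (Fin N) → K} {x : K}
    {m : ℕ} (hmonk : ∑ c ∈ L, bruhatStep K k c (atMarks f m) -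
      (A.map fun a => bruhatStep K a k).sum (atMarks f m) = x • atMarks f m)
    (w : Perm (Fin N)) :
    starProd K L (A ++ [k]) (atMarks f (m + 1)) (w, ∅) =
      starProd K (insert k L) A (atMarks f (m + 1)) (w, ∅) +
        x * starProd K L (A ++ [k]) (atMarks f m) (w, ∅) := by
  have happend : starProd K L (A ++ [k]) = starProd K L A * starOp K L k := by
    rw [starProd, List.map_append, List.prod_append, List.map_singleton, List.prod_singleton,
      starProd]
  have hx : x * starProd K L (A ++ [k]) (atMarks f m) (w, ∅) =
      ∑ c ∈ L, (starProd K L A * starOp K L k) (bruhatStep K k c (atMarks f m)) (w, ∅) -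
        (starProd K L A * starOp K L k) ((A.map fun a => bruhatStep K a k).sum (atMarks f m))
          (w, ∅) := by
    rw [← smul_eq_mul, ← Pi.smul_apply, ← map_smul, ← hmonk, map_sub, map_sum, Pi.sub_apply,
      Finset.sum_apply, happend]
  rw [hx, starProd_insert hL hA hnd, LinearMap.add_apply, Pi.add_apply, leafCoeff_atMarks hL,
    starProd_atMarks k A, Finset.sum_sub_distrib, happend]
  abel

end StarProd

/-! ### Marked chains -/

section MarkedChain

variable {K : Type*} [CommRing K] {N : ℕ} {L : Finset (Fin N)} {A : List (Fin N)}

/-- A set of states inherited backwards along the marked steps with centers in `A` and leaves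
in `L`. -/
def IsBackwardClosed (L : Finset (Fin N)) (A : List (Fin N)) (P : State N → Prop) : Prop :=
  ∀ s, ∀ a ∈ A, ∀ c ∈ L, c ∉ s.2 → len (s.1 * swap a c) = len s.1 + 1 →
    P (s.1 * swap a c, insert c s.2) → P s

theorem starOp_apply_eq_zero {P : State N → Prop} (hP : IsBackwardClosed L A P) {a : Fin N}
    (ha : a ∈ A) {F : State N → K} (hF : ∀ s, ¬P s → F s = 0) {s : State N} (hs : ¬P s) :
    starOp K L a F s = 0 := by
  simp only [starOp, LinearMap.sum_apply, Finset.sum_apply]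
  refine Finset.sum_eq_zero fun i hi => ?_
  clear hi
  induction i generalizing s with
  | zero => exact hF s hs
  | succ i ih =>
    rw [pow_succ', Module.End.mul_apply, markedStep_apply]
    refine Finset.sum_eq_zero fun c hc => ?_
    split_ifs with hcs hlen
    · rfl
    · exact ih fun h => hs (hP s a ha c hc hcs hlen h)
    · rfl

theorem starProd_apply_eq_zero {P : State N → Prop} (hP : IsBackwardClosed L A P)
    {F : State N → K} (hF : ∀ s, ¬P s → F s = 0) {s : State N} (hs : ¬P s) :
    starProd K L A F s = 0 := by
  induction A generalizing s with
  | nil => exact hF s hs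
  | cons a A ih =>
    rw [starProd_cons, Module.End.mul_apply]
    exact starOp_apply_eq_zero hP List.mem_cons_self
      (fun _ => ih fun s b hb => hP s b (List.mem_cons_of_mem a hb)) hs

theorem starOp_eq_one_add (L : Finset (Fin N)) (a : Fin N) :
    starOp K L a = 1 + markedStep K L a * starOp K L a :=
  sub_eq_iff_eq_add.1 (by rw [← mul_starOp L a, sub_mul, one_mul])

theorem starProd_eq_starOp_mul_erase (hL : ∀ a ∈ A, ∀ c ∈ L, a < c) {a : Fin N} (ha : a ∈ A) :
    starProd K L A = starOp K L a * starProd K L (A.erase a) := by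
  rw [← starProd_cons]
  refine ((List.perm_cons_erase ha).map (starOp K L)).prod_eq' (List.pairwise_map.2 ?_)
  exact List.pairwise_of_forall_mem_list fun x hx y hy => commute_starOp_starOp (hL x hx) (hL y hy)

theorem starProd_eq_erase_add (hL : ∀ a ∈ A, ∀ c ∈ L, a < c) {a : Fin N} (ha : a ∈ A) :
    starProd K L A = starProd K L (A.erase a) + markedStep K L a * starProd K L A := by
  conv_lhs => rw [starProd_eq_starOp_mul_erase hL ha, starOp_eq_one_add, add_mul, one_mul,
    mul_assoc, ← starProd_eq_starOp_mul_erase hL ha]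

theorem starProd_apply_of_len {F : State N → K} {q : ℕ} (hF : ∀ s, q < len s.1 → F s = 0)
    {s : State N} (hs : len s.1 = q) : starProd K L A F s = F s := by
  have hclosed (A : List (Fin N)) : IsBackwardClosed L A fun s => len s.1 ≤ q :=
    fun s a _ c _ _ hlen h => by simp only at h ⊢; omega
  induction A with
  | nil => rfl
  | cons a A ih =>
    rw [starProd_cons, starOp_eq_one_add, add_mul, one_mul, mul_assoc, ← starProd_cons,
      LinearMap.add_apply, Pi.add_apply, ih, Module.End.mul_apply, markedStep_apply,
      Finset.sum_eq_zero, add_zero]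
    intro c _
    split_ifs with hcs hlen
    · rfl
    · exact starProd_apply_eq_zero (hclosed _) (fun s hs => hF s (not_le.1 hs))
        (by simp only; omega)
    · rfl

/-- The state `s` leads to the permutation `w'` by a number of marked steps with centers in `A` and
leaves in `L`. -/
def MarkedChain (L : Finset (Fin N)) (A : List (Fin N)) (w' : Perm (Fin N)) : ℕ → State N → Prop
  | 0, s => s.1 = w'
  | j + 1, s => ∃ a ∈ A, ∃ c ∈ L, c ∉ s.2 ∧ len (s.1 * swap a c) = len s.1 + 1 ∧
      MarkedChain L A w' j (s.1 * swap a c, insert c s.2)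

theorem IsBackwardClosed.of_markedChain {P : State N → Prop} (hP : IsBackwardClosed L A P)
    {w' : Perm (Fin N)} (hw' : ∀ B, P (w', B)) {j : ℕ} {s : State N}
    (h : MarkedChain L A w' j s) : P s := by
  induction j generalizing s with
  | zero =>
    obtain ⟨_, B⟩ := s
    obtain rfl : _ = w' := h
    exact hw' B
  | succ j ih =>
    obtain ⟨a, ha, c, hc, hcs, hlen, h⟩ := h
    exact hP s a ha c hc hcs hlen (ih h)

theorem isBackwardClosed_apply_eq (L : Finset (Fin N)) (A : List (Fin N)) (w' : Perm (Fin N)) :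
    IsBackwardClosed L A fun s => ∀ x ∉ A, x ∈ s.2 ∨ x ∉ L → s.1 x = w' x := by
  intro s a ha c hc hcs _ h x hxA hx
  have hxa : x ≠ a := (ne_of_mem_of_not_mem ha hxA).symm
  have hxc : x ≠ c := by
    rintro rfl
    exact hx.elim hcs fun hxL => hxL hc
  simpa only [Perm.mul_apply, swap_apply_of_ne_of_ne hxa hxc] using
    h x hxA (hx.imp_left (Finset.mem_insert_of_mem ·))

theorem starProd_atMarks_single_eq_zero {P : State N → Prop} (hP : IsBackwardClosed L A P)
    {w' : Perm (Fin N)} {m : ℕ} (hw' : ∀ B, B.card = m → P (w', B)) {s : State N} (hs : ¬P s) :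
    starProd K L A (atMarks (Pi.single w' 1) m) s = 0 := by
  refine starProd_apply_eq_zero hP (fun s hs => ?_) hs
  rw [atMarks, ite_eq_right_iff]
  intro hcard
  refine Pi.single_eq_of_ne (fun h => hs ?_) 1
  exact Prod.mk.eta (p := s) ▸ h ▸ hw' s.2 hcard

/-- A leaf is final once it is marked, so `w' c = s.1 a` determines the next leaf `c` used by the
center `a`. -/
theorem starProd_atMarks_single_step (hL : ∀ a ∈ A, ∀ c ∈ L, a < c) (hnd : A.Nodup)
    {w' : Perm (Fin N)} {m : ℕ} {s : State N} {a c : Fin N} (ha : a ∈ A) (hc : c ∈ L)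
    (hcs : c ∉ s.2) (hlen : len (s.1 * swap a c) = len s.1 + 1) (hac : s.1 a = w' c) :
    starProd K L A (atMarks (Pi.single w' 1) m) s =
      starProd K L A (atMarks (Pi.single w' 1) m) (s.1 * swap a c, insert c s.2) := by
  have haL : a ∉ L := fun h => (hL a ha a h).false
  have hzero : starProd K L (A.erase a) (atMarks (Pi.single w' 1) m) s = 0 := by
    refine starProd_atMarks_single_eq_zero (isBackwardClosed_apply_eq L _ w')
      (fun _ _ _ _ _ => rfl) fun h => (hL a ha c hc).ne (w'.injective ?_)
    rw [← hac, h a hnd.not_mem_erase (Or.inr haL)]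
  conv_lhs => rw [starProd_eq_erase_add hL ha]
  rw [LinearMap.add_apply, Pi.add_apply, hzero, zero_add, Module.End.mul_apply, markedStep_apply,
    Finset.sum_eq_single_of_mem c hc, if_neg hcs, if_pos hlen]
  intro d hd hdc
  split_ifs
  · rfl
  · refine starProd_atMarks_single_eq_zero (isBackwardClosed_apply_eq L A w')
      (fun _ _ _ _ _ => rfl) fun h => hdc (w'.injective ?_)
    have hdA : d ∉ A := fun hdA => (hL d hdA d hd).false
    simpa only [Perm.mul_apply, swap_apply_right, hac, eq_comm] using
      h d hdA (Or.inl (Finset.mem_insert_self d s.2))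
  · rfl

theorem starProd_atMarks_single_of_markedChain (hL : ∀ a ∈ A, ∀ c ∈ L, a < c) (hnd : A.Nodup)
    {w' : Perm (Fin N)} {m j : ℕ} {s : State N} (hs : s.2.card + j = m)
    (h : MarkedChain L A w' j s) : starProd K L A (atMarks (Pi.single w' 1) m) s = 1 := by
  induction j generalizing s with
  | zero =>
    obtain rfl : s.1 = w' := h
    rw [starProd_apply_of_len (q := len s.1) ?_ rfl, atMarks, if_pos (by omega), Pi.single_eq_same]
    intro u hu
    rw [atMarks, ite_eq_right_iff]
    exact fun _ => Pi.single_eq_of_ne (fun h => hu.ne' (congr_arg len h)) 1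
  | succ j ih =>
    obtain ⟨a, ha, c, hc, hcs, hlen, h⟩ := h
    have hcA : c ∉ A := fun hcA => (hL c hcA c hc).false
    have hac := (isBackwardClosed_apply_eq L A w').of_markedChain (fun _ _ _ _ => rfl) h c hcA
      (Or.inl (Finset.mem_insert_self c s.2))
    rw [Perm.mul_apply, swap_apply_right] at hac
    rw [starProd_atMarks_single_step hL hnd ha hc hcs hlen hac]
    refine ih ?_ h
    rw [Finset.card_insert_of_notMem hcs]
    omega

theorem starProd_atMarks_single (hL : ∀ a ∈ A, ∀ c ∈ L, a < c) (hnd : A.Nodup)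
    {w' : Perm (Fin N)} {m j : ℕ} {s : State N} (hs : s.2.card + j = m) :
    starProd K L A (atMarks (Pi.single w' 1) m) s =
      if MarkedChain L A w' j s then 1 else 0 := by
  split_ifs with h
  · exact starProd_atMarks_single_of_markedChain hL hnd hs h
  · refine starProd_atMarks_single_eq_zero
      (P := fun s => ∃ j, s.2.card + j = m ∧ MarkedChain L A w' j s) ?_ ?_ ?_
    · rintro s a ha c hc hcs hlen ⟨i, hi, hchain⟩
      rw [Finset.card_insert_of_notMem hcs] at hi
      exact ⟨i + 1, by omega, a, ha, c, hc, hcs, hlen, hchain⟩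
    · exact fun B hB => ⟨0, hB, rfl⟩
    · rintro ⟨i, hi, hchain⟩
      obtain rfl : i = j := by omega
      exact h hchain

theorem starProd_atMarks_empty (hL : ∀ a ∈ A, ∀ c ∈ L, a < c) (hnd : A.Nodup)
    (f : Perm (Fin N) → K) (m : ℕ) (w : Perm (Fin N)) :
    starProd K L A (atMarks f m) (w, ∅) =
      ∑ w' with MarkedChain L A w' m (w, ∅), f w' := by
  have hf : atMarks f m = ∑ w', f w' • atMarks (Pi.single w' 1) m := by
    funext s
    simp [atMarks, Finset.sum_apply, Pi.single_apply]
  rw [hf, map_sum, Finset.sum_apply, Finset.sum_filter]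
  refine Finset.sum_congr rfl fun w' _ => ?_
  rw [map_smul, Pi.smul_apply, starProd_atMarks_single hL hnd (zero_add m), smul_eq_mul, mul_ite,
    mul_one, mul_zero]

end MarkedChain

section RelR

variable {N : ℕ} [NeZero N]

theorem coe_pos {b : ℕ} (hb : 1 ≤ b) (hbN : b ≤ N) : (pos N b : ℕ) = b - 1 :=
  Nat.mod_eq_of_lt (by omega)

theorem tProd_succ (a b : ℕ → ℕ) (i : ℕ) :
    tProd N a b (i + 1) =
      t N (a 0) (b 0) * tProd N (fun j => a (j + 1)) (fun j => b (j + 1)) i := by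
  rw [tProd, List.range_succ_eq_map, List.map_cons, List.prod_cons, List.map_map]
  rfl

theorem stepOK_succ (k m : ℕ) (w : Perm (Fin N)) (a b : ℕ → ℕ) :
    StepOK N k (m + 1) w a b ↔
      (1 ≤ a 0 ∧ a 0 ≤ k ∧ k < b 0 ∧ b 0 ≤ N) ∧ len (w * t N (a 0) (b 0)) = len w + 1 ∧
        StepOK N k m (w * t N (a 0) (b 0)) (fun i => a (i + 1)) fun i => b (i + 1) := by
  constructor
  · rintro ⟨hab, hlen⟩
    have hlen₁ : len (w * t N (a 0) (b 0)) = len w + 1 := by simpa [tProd] using hlen 1 (by omega)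
    refine ⟨hab 0 m.succ_pos, hlen₁, fun i hi => hab (i + 1) (by omega), fun i hi => ?_⟩
    rw [mul_assoc, ← tProd_succ, hlen (i + 1) (by omega), hlen₁]
    omega
  · rintro ⟨hab₀, hlen₁, hab, hlen⟩
    refine ⟨Nat.forall_lt_succ_left.2 ⟨hab₀, hab⟩, fun i hi => ?_⟩
    cases i with
    | zero => simp [tProd]
    | succ i =>
      rw [tProd_succ, ← mul_assoc, hlen i (by omega), hlen₁]
      omega

/-- The relation `w →_{r[k,m]} w'` with the additional condition that the `b`'s avoid `B`. -/
def RelRAvoiding (k m : ℕ) (B : Finset (Fin N)) (w w' : Perm (Fin N)) : Prop :=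
  ∃ a b : ℕ → ℕ, StepOK N k m w a b ∧ w' = w * tProd N a b m ∧
    (∀ i j, i < m → j < m → i ≠ j → b i ≠ b j) ∧ ∀ i < m, pos N (b i) ∉ B

theorem relRAvoiding_zero (k : ℕ) (B : Finset (Fin N)) (w w' : Perm (Fin N)) :
    RelRAvoiding k 0 B w w' ↔ w = w' := by
  simp [RelRAvoiding, StepOK, tProd, eq_comm]

theorem relRAvoiding_empty (k m : ℕ) (w w' : Perm (Fin N)) :
    RelRAvoiding k m ∅ w w' ↔ RelR N k m w w' := by
  simp [RelRAvoiding, RelR]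

theorem relRAvoiding_succ (k m : ℕ) (B : Finset (Fin N)) (w w' : Perm (Fin N)) :
    RelRAvoiding k (m + 1) B w w' ↔
      ∃ a : Fin N, (a : ℕ) < k ∧ ∃ c : Fin N, k ≤ (c : ℕ) ∧ c ∉ B ∧
        len (w * swap a c) = len w + 1 ∧ RelRAvoiding k m (insert c B) (w * swap a c) w' := by
  constructor
  · rintro ⟨a, b, hstep, hw', hb, hB⟩
    obtain ⟨hab, hlen, htail⟩ := (stepOK_succ k m w a b).1 hstep
    refine ⟨pos N (a 0), ?_, pos N (b 0), ?_, hB 0 m.succ_pos, hlen, _, _, htail, ?_,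
      fun i j hi hj hij => hb _ _ (by omega) (by omega) (by omega), fun i hi => ?_⟩
    · rw [coe_pos] <;> omega
    · rw [coe_pos] <;> omega
    · rw [hw', tProd_succ, ← mul_assoc, t]
    · rw [Finset.mem_insert, not_or, Fin.ext_iff]
      have hbi := hstep.1 (i + 1) (by omega)
      have hne := hb (i + 1) 0 (by omega) (by omega) (by omega)
      rw [coe_pos (by omega) (by omega), coe_pos (by omega) (by omega)]
      exact ⟨by omega, hB _ (by omega)⟩
  · rintro ⟨x, hx, c, hc, hcB, hlen, a', b', hstep, hw', hb, hB⟩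
    obtain ⟨a, ha₀, rfl⟩ : ∃ a : ℕ → ℕ, a 0 = x + 1 ∧ (fun i => a (i + 1)) = a' :=
      ⟨fun i => i.casesOn (x + 1) a', rfl, rfl⟩
    obtain ⟨b, hb₀, rfl⟩ : ∃ b : ℕ → ℕ, b 0 = c + 1 ∧ (fun i => b (i + 1)) = b' :=
      ⟨fun i => i.casesOn (c + 1) b', rfl, rfl⟩
    have ht : t N (a 0) (b 0) = swap x c := by
      rw [t, ha₀, hb₀, pos_val_add_one, pos_val_add_one]
    have hb₀_ne (i) (hi : i < m) : b 0 ≠ b (i + 1) := fun h =>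
      hB i hi (by simp only [← h, hb₀, pos_val_add_one, Finset.mem_insert_self])
    refine ⟨a, b, (stepOK_succ k m w a b).2 ?_, ?_, ?_, Nat.forall_lt_succ_left.2 ⟨?_, ?_⟩⟩
    · rw [ht]
      exact ⟨by omega, hlen, hstep⟩
    · rw [hw', tProd_succ, ← mul_assoc, ht]
    · rintro (_ | i) (_ | j) hi hj hij
      · exact absurd rfl hij
      · exact hb₀_ne j (by omega)
      · exact (hb₀_ne i (by omega)).symm
      · exact hb i j (by omega) (by omega) (by omega)
    · rwa [hb₀, pos_val_add_one]
    · exact fun i hi h => hB i hi (Finset.mem_insert_of_mem h)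

theorem markedChain_iff_relRAvoiding {k : ℕ} {L : Finset (Fin N)} {A : List (Fin N)}
    (hL : ∀ c, c ∈ L ↔ k ≤ (c : ℕ)) (hA : ∀ a, a ∈ A ↔ (a : ℕ) < k) {m : ℕ}
    {w w' : Perm (Fin N)} {B : Finset (Fin N)} :
    MarkedChain L A w' m (w, B) ↔ RelRAvoiding k m B w w' := by
  induction m generalizing w B with
  | zero => exact (relRAvoiding_zero k B w w').symm
  | succ m ih => simp only [MarkedChain, relRAvoiding_succ, ih, hL, hA]

theorem markedChain_iff_relR {k m : ℕ} {L : Finset (Fin N)} {A : List (Fin N)}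
    (hL : ∀ c, c ∈ L ↔ k ≤ (c : ℕ)) (hA : ∀ a, a ∈ A ↔ (a : ℕ) < k) {w w' : Perm (Fin N)} :
    MarkedChain L A w' m (w, ∅) ↔ RelR N k m w w' := by
  rw [markedChain_iff_relRAvoiding hL hA, relRAvoiding_empty]

end RelR

/-! ### Pieri's rule -/

section Pieri

variable {N : ℕ}

/-- The first `k` positions in increasing order, the possible centers of a `k`-Bruhat step. -/
def centers (N k : ℕ) : List (Fin N) :=
  (List.finRange N).take k

/-- The positions after the first `k`, the possible leaves of a `k`-Bruhat step. -/
def leaves (N k : ℕ) : Finset (Fin N) :=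
  Finset.univ.filter fun c => k ≤ (c : ℕ)

theorem mem_centers {k : ℕ} {a : Fin N} : a ∈ centers N k ↔ (a : ℕ) < k := by
  simp only [centers, List.mem_take_iff_getElem, List.getElem_finRange, List.length_finRange,
    lt_min_iff, Fin.ext_iff, Fin.val_cast]
  exact ⟨fun ⟨_, hi, h⟩ => h ▸ hi.1, fun h => ⟨a, ⟨h, a.isLt⟩, rfl⟩⟩

theorem nodup_centers (N k : ℕ) : (centers N k).Nodup :=
  (List.nodup_finRange N).sublist (List.take_sublist k _)

theorem centers_val_add_one (k : Fin N) : centers N (k + 1) = centers N k ++ [k] := by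
  rw [centers, List.take_add_one, List.getElem?_eq_getElem (by simp), List.getElem_finRange]
  rfl

theorem sum_map_centers {M : Type*} [AddCommMonoid M] (f : Fin N → M) (k : Fin N) :
    ((centers N k).map f).sum = ∑ a with a < k, f a := by
  rw [← List.sum_toFinset f (nodup_centers N k)]
  congr 1
  ext a
  rw [List.mem_toFinset, mem_centers, Finset.mem_filter_univ, Fin.lt_def]

theorem mem_leaves {k : ℕ} {c : Fin N} : c ∈ leaves N k ↔ k ≤ (c : ℕ) :=
  Finset.mem_filter_univ c

theorem leaves_val_add_one (k : Fin N) :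
    leaves N (k + 1) = Finset.univ.filter (k < ·) :=
  rfl

theorem insert_leaves (k : Fin N) : insert k (leaves N (k + 1)) = leaves N k := by
  ext c
  rw [Finset.mem_insert, mem_leaves, mem_leaves, Fin.ext_iff]
  omega

theorem lt_of_mem_centers_of_mem_leaves {k : ℕ} {a c : Fin N} (ha : a ∈ centers N k)
    (hc : c ∈ leaves N k) : a < c :=
  Fin.lt_def.2 ((mem_centers.1 ha).trans_le (mem_leaves.1 hc))

variable [NeZero N]

theorem starProd_centers_eq_sum_relR {K : Type*} [CommRing K] (f : Perm (Fin N) → K) (k m : ℕ)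
    (w : Perm (Fin N)) :
    starProd K (leaves N k) (centers N k) (atMarks f m) (w, ∅) =
      ∑ w' with RelR N k m w w', f w' := by
  simp only [starProd_atMarks_empty (fun _ ha _ hc => lt_of_mem_centers_of_mem_leaves ha hc)
    (nodup_centers N k), markedChain_iff_relR (fun _ => mem_leaves) fun _ => mem_centers]

theorem relR_zero {k : ℕ} {w w' : Perm (Fin N)} : RelR N k 0 w w' ↔ w = w' := by
  rw [← relRAvoiding_empty, relRAvoiding_zero]

theorem bruhatStep_atMarks_SS (k : Fin N) (m : ℕ) :
    ∑ c ∈ leaves N (k + 1), bruhatStep (HRing N) k c (atMarks (SS N) m) -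
      ((centers N k).map fun a => bruhatStep (HRing N) a k).sum (atMarks (SS N) m) =
        Ideal.Quotient.mk (symIdeal N) (X k) • atMarks (SS N) m := by
  funext s
  simp only [sum_map_centers, leaves_val_add_one, Pi.sub_apply, Finset.sum_apply,
    LinearMap.sum_apply, bruhatStep_apply, Pi.smul_apply, smul_eq_mul, atMarks]
  by_cases hs : s.2.card = m
  · simp only [hs, if_true, X_mul_SS]
  · simp [hs]

theorem starProd_centers_atMarks_SS {k : ℕ} (hk : k ≤ N) (m : ℕ) (w : Perm (Fin N)) :
    starProd (HRing N) (leaves N k) (centers N k) (atMarks (SS N) m) (w, ∅) =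
      Ideal.Quotient.mk (symIdeal N) (hPoly N k m) * SS N w := by
  induction k generalizing m with
  | zero => cases m <;> simp [starProd, centers, atMarks, hPoly_zero_right, hPoly_zero_left]
  | succ k ihk =>
    obtain ⟨k, rfl⟩ : ∃ a : Fin N, (a : ℕ) = k := ⟨⟨k, hk⟩, rfl⟩
    induction m with
    | zero => simp [starProd_centers_eq_sum_relR, relR_zero, hPoly_zero_right, Finset.filter_eq]
    | succ m ihm =>
      rw [centers_val_add_one, starProd_append_atMarks_succ
          (fun c hc => Fin.lt_def.2 (mem_leaves.1 hc)) (fun a ha => Fin.lt_def.2 (mem_centers.1 ha))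
          (nodup_centers N k) (bruhatStep_atMarks_SS k m), insert_leaves, ← centers_val_add_one,
        ihm, ihk (Nat.le_of_succ_le hk), hPoly_succ_succ, map_add, map_mul]
      ring

end Pieri

theorem pieri_complete_homogeneous_general {N : ℕ} [NeZero N] {k : ℕ} (hk : k ≤ N) (m : ℕ)
    (w : Perm (Fin N)) :
    SS N w * Ideal.Quotient.mk (symIdeal N) (hPoly N k m) =
      ∑ w' ∈ Finset.univ.filter (RelR N k m w), SS N w' := by
  rw [mul_comm, ← starProd_centers_atMarks_SS hk, starProd_centers_eq_sum_relR]

/-- Pieri's rule for complete homogeneous symmetric polynomials: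
`𝔖_w · h_m(x₁,…,x_k) = Σ_{w →_{r[k,m]} w'} 𝔖_{w'}` in `Hₙ` (here the paper's `n` is `n+1`). -/
theorem pieri_complete_homogeneous (n k m : ℕ) (hk : 1 ≤ k) (hm : 1 ≤ m)
    (hkm : k + m ≤ n + 1) (w : Equiv.Perm (Fin (n + 1))) :
    SS (n + 1) w * Ideal.Quotient.mk (symIdeal (n + 1)) (hPoly (n + 1) k m) =
      ∑ w' ∈ Finset.univ.filter (RelR (n + 1) k m w), SS (n + 1) w' :=
  pieri_complete_homogeneous_general (by omega) m w

end SchubertPieri
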